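/- arXiv:2512.11379 — 3 statements merged into one kernel-verified Lean document; each statement's English description precedes it below -/
import Mathlib

section
/- For each γ ∈ H there exist unique coefficients c_2, …, c_{(p−1)/2} ∈ K such that γ(x, y) = Σ_{a=2}^{(p−1)/2} c_a·ϑ_a(x, y) for all x, y ∈ O. -/
set_option synthInstance.maxHeartbeats 1000000
set_option maxHeartbeats 1000000

namespace MaximalClassFrame

variable (p : ℕ) [Fact p.Prime]
variable (K : Type) [Field K] [Algebra ℚ_[p] K] [Algebra ℤ_[p] K]
  [IsScalarTower ℤ_[p] ℚ_[p] K]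

/-- The maximal order `𝒪` of `K`: the integral closure of `ℤ_p` in `K`. -/
noncomputable abbrev 𝒪 : Subalgebra ℤ_[p] K := integralClosure ℤ_[p] K

variable (θ : 𝒪 p K)

/-- The maximal ideal `𝔭` of `𝒪`, generated by `κ = θ - 1`. -/
noncomputable def pid : Ideal (𝒪 p K) := Ideal.span {θ - 1}

/-- A `ℤ_p`-bilinear map `γ : 𝒪 × 𝒪 → 𝒪` is `P`-equivariant if it is
alternating and satisfies `γ(θx, θy) = θ·γ(x,y)` for all `x, y`. -/
def IsPEquivariant (γ : 𝒪 p K →ₗ[ℤ_[p]] 𝒪 p K →ₗ[ℤ_[p]] 𝒪 p K) : Prop :=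
  (∀ x, γ x x = 0) ∧ ∀ x y, γ (θ * x) (θ * y) = θ * γ x y

/-- `γ ∈ Ĥ_i`: the additive subgroup of `𝒪` generated by
`{γ(x,y) : x, y ∈ 𝔭^i}` equals `𝔭^(2i+1)`. -/
def InHhat (i : ℕ) (γ : 𝒪 p K →ₗ[ℤ_[p]] 𝒪 p K →ₗ[ℤ_[p]] 𝒪 p K) : Prop :=
  Submodule.span ℤ (Set.image2 (fun x y => γ x y)
      ((pid p K θ ^ i : Ideal (𝒪 p K)) : Set (𝒪 p K))
      ((pid p K θ ^ i : Ideal (𝒪 p K)) : Set (𝒪 p K)))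
    = (pid p K θ ^ (2 * i + 1)).restrictScalars ℤ

variable (σ : ℤ → (K →ₐ[ℚ_[p]] K))

/-- The map `ϑ_a(x,y) = σ_a(x)·σ_{1-a}(y) − σ_{1-a}(x)·σ_a(y)` on `K × K`. -/
noncomputable def thetaMap (a : ℤ) : K → K → K :=
  fun x y => σ a x * σ (1 - a) y - σ (1 - a) x * σ a y

open Finset

theorem sum_zmod_eq_sum_Icc_add_reflection {M : Type*} [AddCommMonoid M] {q m : ℕ} [NeZero q]
    (hq : q = 2 * m + 1) (g : ZMod q → M) (h0 : g 0 = 0) (h1 : g 1 = 0)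
    (hmid : g (m + 1) = 0) :
    ∑ b, g b = ∑ a ∈ Icc 2 m, (g a + g (1 - a)) := by
  have hrange : ∑ b, g b = ∑ i ∈ range q, g (i : ZMod q) := by
    refine sum_bij' (fun b _ => b.val) (fun i _ => (i : ZMod q)) ?_ ?_ ?_ ?_ ?_
    · intro b _
      exact mem_range.2 (ZMod.val_lt b)
    · simp
    · simp
    · intro i hi
      exact ZMod.val_cast_of_lt (mem_range.1 hi)
    · simp
  have hreflect : ∑ a ∈ Icc 2 m, g (1 - a) = ∑ a ∈ Icc (m + 2) (2 * m), g (a : ZMod q) := by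
    refine sum_bij' (fun a _ => q + 1 - a) (fun a _ => q + 1 - a) ?_ ?_ ?_ ?_ ?_
    · intro a ha
      simp only [mem_Icc] at *
      omega
    · intro a ha
      simp only [mem_Icc] at *
      omega
    · intro a ha
      simp only [mem_Icc] at *
      omega
    · intro a ha
      simp only [mem_Icc] at *
      omega
    · intro a ha
      simp only [mem_Icc] at ha
      rw [Nat.cast_sub (by omega)]
      simp
  have hdisj : Disjoint (Icc 2 m) (Icc (m + 2) (2 * m)) := by
    rw [disjoint_left]
    intro a ha ha'
    simp only [mem_Icc] at *
    omega
  rw [hrange, sum_add_distrib, hreflect, ← sum_union hdisj]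
  symm
  refine sum_subset ?_ ?_
  · intro a ha
    simp only [mem_union, mem_Icc, mem_range] at *
    omega
  · intro a ha ha'
    simp only [mem_union, mem_Icc, mem_range] at *
    obtain rfl | rfl | rfl : a = 0 ∨ a = 1 ∨ a = m + 1 := by omega
    · simpa using h0
    · simpa using h1
    · simpa using hmid

theorem fourier_inversion {R F : Type*} [CommRing R] [Fintype R] [Field F]
    {ψ : AddChar R F} (hψ : ψ.IsPrimitive) (hcard : (Fintype.card R : F) ≠ 0) (f : R → F) (n : R) :
    f n = ∑ b, ((Fintype.card R : F)⁻¹ * ∑ k, f k * ψ (-(b * k))) * ψ (b * n) := by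
  classical
  have hsplit : ∀ b, ((Fintype.card R : F)⁻¹ * ∑ k, f k * ψ (-(b * k))) * ψ (b * n)
      = ∑ k, (Fintype.card R : F)⁻¹ * f k * ψ (b * (n - k)) := by
    intro b
    rw [mul_sum, sum_mul]
    refine sum_congr rfl fun k _ => ?_
    rw [mul_sub, sub_eq_neg_add, AddChar.map_add_eq_mul]
    ring
  simp_rw [hsplit]
  rw [sum_comm]
  simp_rw [← mul_sum, AddChar.sum_mulShift _ hψ, sub_eq_zero]
  rw [sum_eq_single n]
  · rw [if_pos rfl]
    field_simp
  · intro k _ hk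
    simp [hk.symm]
  · simp

theorem exists_coeff_of_reflection {F : Type*} [Field F] [CharZero F] {q m : ℕ} [NeZero q]
    (hq : q = 2 * m + 1) {ψ : AddChar (ZMod q) F} (hψ : ψ.IsPrimitive)
    (f : ZMod q → F) (hsum : ∑ n, f n = 0) (hneg : ∀ n, f (-n) = -(ψ (-n) * f n)) :
    ∃ d : ZMod q → F, ∀ n, f n = ∑ a ∈ Icc 2 m, d a * (ψ ((1 - a) * n) - ψ (a * n)) := by
  set d : ZMod q → F := fun b => (Fintype.card (ZMod q) : F)⁻¹ * ∑ k, f k * ψ (-(b * k)) with hd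
  have hd0 : d 0 = 0 := by simp [hd, hsum]
  have hd1 : ∀ b, d (1 - b) = -d b := by
    intro b
    simp only [hd]
    rw [← mul_neg, ← sum_neg_distrib, ← Equiv.sum_comp (Equiv.neg (ZMod q))]
    congr 1
    refine sum_congr rfl fun k _ => ?_
    simp only [Equiv.neg_apply]
    rw [hneg, show -((1 - b) * -k) = k + -(b * k) by ring, AddChar.map_add_eq_mul]
    have hk : ψ (-k) * ψ k = 1 := by
      rw [← AddChar.map_add_eq_mul]
      simp
    linear_combination (-(f k * ψ (-(b * k)))) * hk
  have hmid : d (m + 1) = 0 := by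
    have h2 : (1 : ZMod q) - (m + 1) = m + 1 := by
      have hz : ((2 * m + 1 : ℕ) : ZMod q) = 0 := by
        rw [← hq]
        simp
      push_cast at hz
      linear_combination -hz
    have h3 := hd1 (m + 1)
    rw [h2] at h3
    exact self_eq_neg.1 h3
  refine ⟨fun a => -d a, fun n => ?_⟩
  have hcard : (Fintype.card (ZMod q) : F) ≠ 0 := Nat.cast_ne_zero.2 Fintype.card_ne_zero
  rw [fourier_inversion hψ hcard f n]
  rw [sum_zmod_eq_sum_Icc_add_reflection hq (fun b => d b * ψ (b * n))]
  · refine sum_congr rfl fun a _ => ?_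
    rw [hd1]
    ring
  · simp [hd0]
  · have h1 : d 1 = 0 := by simpa [hd0] using hd1 0
    simp [h1]
  · simp [hmid]

theorem sum_mul_char_eq_neg_card_mul_coeff {F : Type*} [Field F] {q m : ℕ} [NeZero q]
    (hq : q = 2 * m + 1) {ψ : AddChar (ZMod q) F} (hψ : ψ.IsPrimitive) {f : ZMod q → F}
    {c : ℕ → F} (h : ∀ n, f n = ∑ a ∈ Icc 2 m, c a * (ψ ((1 - a) * n) - ψ (a * n)))
    {b : ℕ} (hb : b ∈ Icc 2 m) :
    ∑ n, f n * ψ (-(b * n)) = -(q * c b) := by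
  have hsplit : ∀ n, f n * ψ (-(b * n)) =
      ∑ a ∈ Icc 2 m, c a * (ψ (n * (1 - a - b)) - ψ (n * (a - b))) := by
    intro n
    rw [h, sum_mul]
    refine sum_congr rfl fun a _ => ?_
    rw [show n * (1 - a - b) = (1 - a) * n + -(b * n) by ring,
      show n * (a - b) = a * n + -(b * n) by ring, AddChar.map_add_eq_mul, AddChar.map_add_eq_mul]
    ring
  simp_rw [hsplit]
  rw [sum_comm]
  simp_rw [← mul_sum, sum_sub_distrib, AddChar.sum_mulShift _ hψ, ZMod.card]
  rw [sum_eq_single b]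
  · have hne : (1 - b - b : ZMod q) ≠ 0 := by
      intro h0
      have h1 : ((2 * b : ℕ) : ZMod q) = ((1 : ℕ) : ZMod q) := by
        push_cast
        linear_combination -h0
      rw [ZMod.natCast_eq_natCast_iff] at h1
      simp only [mem_Icc] at hb
      have h2 := h1.eq_of_lt_of_lt (by omega) (by omega)
      omega
    simp [hne, mul_comm]
  · intro a ha hab
    simp only [mem_Icc] at ha hb
    have hne : (1 - a - b : ZMod q) ≠ 0 := by
      intro h0
      have h1 : ((a + b : ℕ) : ZMod q) = ((1 : ℕ) : ZMod q) := by
        push_cast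
        linear_combination -h0
      rw [ZMod.natCast_eq_natCast_iff] at h1
      have h2 := h1.eq_of_lt_of_lt (by omega) (by omega)
      omega
    have hne' : (a - b : ZMod q) ≠ 0 := by
      intro h0
      rw [sub_eq_zero, ZMod.natCast_eq_natCast_iff] at h0
      exact hab (h0.eq_of_lt_of_lt (by omega) (by omega))
    simp [hne, hne']
  · intro h0
    exact absurd hb h0

theorem exists_smul_eq_aeval (hgen : Algebra.adjoin ℚ_[p] {(θ : K)} = ⊤) (x : 𝒪 p K) :
    ∃ (r : ℤ_[p]) (P : Polynomial ℤ_[p]), r ≠ 0 ∧ r • x = Polynomial.aeval θ P := by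
  have hx : (x : K) ∈ Algebra.adjoin ℚ_[p] {(θ : K)} := hgen ▸ Algebra.mem_top
  rw [Algebra.adjoin_singleton_eq_range_aeval] at hx
  obtain ⟨Q, hQ⟩ := hx
  obtain ⟨r, hr, hP⟩ :=
    IsLocalization.integerNormalization_spec (nonZeroDivisors ℤ_[p]) Q
  refine ⟨r, IsLocalization.integerNormalization (nonZeroDivisors ℤ_[p]) Q,
    nonZeroDivisors.ne_zero hr, Subtype.ext ?_⟩
  have h := congrArg (Polynomial.aeval (θ : K)) hP
  rw [Polynomial.aeval_map_algebraMap] at h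
  have h2 : Polynomial.aeval (θ : K) (r • Q) = r • (x : K) := by
    rw [← IsScalarTower.algebraMap_smul ℚ_[p] r Q, map_smul, IsScalarTower.algebraMap_smul]
    exact congrArg (r • ·) hQ
  rw [h2] at h
  have h3 := Polynomial.aeval_algHom_apply (𝒪 p K).val θ
    (IsLocalization.integerNormalization (nonZeroDivisors ℤ_[p]) Q)
  exact h.symm.trans h3

/-- A `ℤ_p`-linear map `𝒪 → K` is determined by its values on the powers of `θ`. -/
theorem linearMap_eq_zero_of_pow (hgen : Algebra.adjoin ℚ_[p] {(θ : K)} = ⊤)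
    (L : 𝒪 p K →ₗ[ℤ_[p]] K) (hL : ∀ i : ℕ, L (θ ^ i) = 0) : L = 0 := by
  ext x
  obtain ⟨r, P, hr, hx⟩ := exists_smul_eq_aeval p K θ hgen x
  have h : r • L x = 0 := by
    rw [← map_smul, hx, Polynomial.aeval_eq_sum_range, map_sum]
    exact sum_eq_zero fun i _ => by rw [map_smul, hL, smul_zero]
  rw [← IsScalarTower.algebraMap_smul ℚ_[p] r (L x), smul_eq_zero] at h
  refine h.resolve_left fun h0 => hr ?_
  exact (FaithfulSMul.algebraMap_injective ℤ_[p] ℚ_[p]) (by rw [h0, map_zero])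

/-- The map `ϑ_a` restricted to `𝒪`, as a `ℤ_p`-bilinear map. -/
noncomputable def thetaBilin (a : ℤ) : 𝒪 p K →ₗ[ℤ_[p]] 𝒪 p K →ₗ[ℤ_[p]] K :=
  LinearMap.mk₂ ℤ_[p] (fun x y => thetaMap p K σ a x y)
    (fun x x' y => by simp only [thetaMap, Subalgebra.coe_add, map_add]; ring)
    (fun r x y => by
      simp only [thetaMap, Subalgebra.coe_smul, ← IsScalarTower.algebraMap_smul ℚ_[p] r, map_smul,
        smul_mul_assoc, smul_sub])
    (fun x y y' => by simp only [thetaMap, Subalgebra.coe_add, map_add]; ring)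
    (fun r x y => by
      simp only [thetaMap, Subalgebra.coe_smul, ← IsScalarTower.algebraMap_smul ℚ_[p] r, map_smul,
        mul_smul_comm, smul_sub])

section

variable {p K θ σ}

omit [IsScalarTower ℤ_[p] ℚ_[p] K] in
theorem map_zmodChar (hσ : ∀ j : ℤ, ¬ ((p : ℤ) ∣ j) → σ j (θ : K) = (θ : K) ^ j)
    (hθ : (θ : K) ^ p = 1) {j : ℤ} (hj : ¬ ((p : ℤ) ∣ j)) (n : ZMod p) :
    σ j (AddChar.zmodChar p hθ n) = AddChar.zmodChar p hθ (j * n) := by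
  have hone : AddChar.zmodChar p hθ 1 = (θ : K) := by
    simpa using AddChar.zmodChar_apply' hθ 1
  have hn : (j * n : ZMod p) = (n.val : ℕ) • (j • (1 : ZMod p)) := by
    simp [mul_comm]
  rw [AddChar.zmodChar_apply, map_pow, hσ j hj, hn, AddChar.map_nsmul_eq_pow,
    AddChar.map_zsmul_eq_zpow, hone]

omit [Algebra ℚ_[p] K] [IsScalarTower ℤ_[p] ℚ_[p] K] in
theorem IsPEquivariant.map_pow_mul {γ : 𝒪 p K →ₗ[ℤ_[p]] 𝒪 p K →ₗ[ℤ_[p]] 𝒪 p K}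
    (hγ : IsPEquivariant p K θ γ) (i : ℕ) (x y : 𝒪 p K) :
    γ (θ ^ i * x) (θ ^ i * y) = θ ^ i * γ x y := by
  induction i with
  | zero => simp
  | succ i ih => rw [pow_succ', mul_assoc, mul_assoc, hγ.2, ih, mul_assoc]

/-- `γ` is the combination of the `ϑ_a` with coefficients `c` exactly when this holds at the pairs
`(1, θ^n)`. -/
theorem IsPEquivariant.eq_sum_thetaMap_iff (hθ : (θ : K) ^ p = 1) (hθ' : θ ^ p = 1)
    (hgen : Algebra.adjoin ℚ_[p] {(θ : K)} = ⊤)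
    (hσ : ∀ j : ℤ, ¬ ((p : ℤ) ∣ j) → σ j (θ : K) = (θ : K) ^ j)
    {γ : 𝒪 p K →ₗ[ℤ_[p]] 𝒪 p K →ₗ[ℤ_[p]] 𝒪 p K} (hγ : IsPEquivariant p K θ γ) (c : ℕ → K) :
    (∀ x y : 𝒪 p K, ((γ x y : 𝒪 p K) : K)
        = ∑ a ∈ Icc 2 ((p - 1) / 2), c a * thetaMap p K σ (a : ℤ) (x : K) (y : K)) ↔
      ∀ n : ZMod p, ((γ 1 (AddChar.zmodChar p hθ' n) : 𝒪 p K) : K) =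
        ∑ a ∈ Icc 2 ((p - 1) / 2),
          c a * (AddChar.zmodChar p hθ ((1 - a) * n) - AddChar.zmodChar p hθ (a * n)) := by
  have hcoe : ∀ n, ((AddChar.zmodChar p hθ' n : 𝒪 p K) : K) = AddChar.zmodChar p hθ n :=
    fun n => by simp [AddChar.zmodChar_apply]
  have hval : ∀ a ∈ Icc 2 ((p - 1) / 2), ∀ k n : ZMod p,
      thetaMap p K σ (a : ℤ) (AddChar.zmodChar p hθ k) (AddChar.zmodChar p hθ (k + n)) =
        AddChar.zmodChar p hθ k *
          (AddChar.zmodChar p hθ ((1 - a) * n) - AddChar.zmodChar p hθ (a * n)) := by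
    intro a ha k n
    simp only [mem_Icc] at ha
    have hdvd : ¬ (p : ℤ) ∣ (a : ℤ) := fun h => by
      have := Int.le_of_dvd (by omega) h
      omega
    have hdvd' : ¬ (p : ℤ) ∣ (1 - a : ℤ) := fun h => by
      have := Int.le_of_dvd (by omega) ((dvd_neg (α := ℤ)).2 h)
      omega
    simp only [thetaMap]
    rw [map_zmodChar hσ hθ hdvd, map_zmodChar hσ hθ hdvd', map_zmodChar hσ hθ hdvd,
      map_zmodChar hσ hθ hdvd', mul_sub, ← AddChar.map_add_eq_mul, ← AddChar.map_add_eq_mul,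
      ← AddChar.map_add_eq_mul, ← AddChar.map_add_eq_mul]
    push_cast
    congr 2 <;> ring
  constructor
  · intro h n
    rw [h]
    refine sum_congr rfl fun a ha => ?_
    have := hval a ha 0 n
    simp only [AddChar.map_zero_eq_one, zero_add, one_mul] at this
    rw [hcoe, OneMemClass.coe_one, this]
  · intro h
    let B : 𝒪 p K →ₗ[ℤ_[p]] 𝒪 p K →ₗ[ℤ_[p]] K :=
      γ.compr₂ (𝒪 p K).val.toLinearMap -
        ∑ a ∈ Icc 2 ((p - 1) / 2), (thetaBilin p K σ a).compr₂ (LinearMap.mulLeft ℤ_[p] (c a))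
    have hB : ∀ x y, B x y = ((γ x y : 𝒪 p K) : K) -
        ∑ a ∈ Icc 2 ((p - 1) / 2), c a * thetaMap p K σ (a : ℤ) (x : K) (y : K) := by
      intro x y
      simp [B, thetaBilin, LinearMap.sum_apply]
    have hpow : ∀ i j : ℕ, B (θ ^ i) (θ ^ j) = 0 := by
      intro i j
      have hj : θ ^ j = θ ^ i * AddChar.zmodChar p hθ' (j - i) := by
        rw [← AddChar.zmodChar_apply' hθ', ← AddChar.zmodChar_apply' hθ', ← AddChar.map_add_eq_mul,
          add_sub_cancel]
      have hγij := hγ.map_pow_mul i 1 (AddChar.zmodChar p hθ' (j - i))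
      rw [mul_one, ← hj] at hγij
      rw [hB, hγij, Subalgebra.coe_mul, h, mul_sum, sub_eq_zero]
      refine sum_congr rfl fun a ha => ?_
      have hv := hval a ha i (j - i)
      rw [add_sub_cancel, AddChar.zmodChar_apply', AddChar.zmodChar_apply'] at hv
      rw [SubmonoidClass.coe_pow, SubmonoidClass.coe_pow, hv]
      ring
    have hB0 : ∀ x y, B x y = 0 := by
      intro x y
      have h1 : B.flip y = 0 := by
        refine linearMap_eq_zero_of_pow p K θ hgen _ fun i => ?_
        have h2 : B (θ ^ i) = 0 := linearMap_eq_zero_of_pow p K θ hgen _ (hpow i)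
        simp [h2]
      simpa using LinearMap.congr_fun h1 x
    intro x y
    exact sub_eq_zero.1 ((hB x y).symm.trans (hB0 x y))

end

/-- Each `γ ∈ H` is a unique linear combination
`γ = Σ_{a=2}^{(p−1)/2} c_a·ϑ_a` with `c_a ∈ K`. -/
theorem frame_theta_basis (hp : 5 ≤ p) (hθ : IsPrimitiveRoot (θ : K) p)
    (hgen : Algebra.adjoin ℚ_[p] {(θ : K)} = ⊤)
    (hσ : ∀ j : ℤ, ¬ ((p : ℤ) ∣ j) → σ j (θ : K) = (θ : K) ^ j)
    (γ : 𝒪 p K →ₗ[ℤ_[p]] 𝒪 p K →ₗ[ℤ_[p]] 𝒪 p K) (hγ : IsPEquivariant p K θ γ) :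
    ∃! c : ℕ → K, (∀ a : ℕ, a ∉ Finset.Icc 2 ((p - 1) / 2) → c a = 0) ∧
      ∀ x y : 𝒪 p K, ((γ x y : 𝒪 p K) : K)
        = ∑ a ∈ Finset.Icc 2 ((p - 1) / 2), c a * thetaMap p K σ (a : ℤ) (x : K) (y : K) := by
  have hθ1 : (θ : K) ^ p = 1 := hθ.pow_eq_one
  have hθ1' : θ ^ p = 1 := Subtype.ext (by simpa using hθ1)
  have hodd : p = 2 * ((p - 1) / 2) + 1 := by
    have := (Fact.out : p.Prime).eq_two_or_odd
    omega
  have hchar : CharZero K := charZero_of_injective_algebraMap (algebraMap ℚ_[p] K).injective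
  have hprim : (AddChar.zmodChar p hθ1).IsPrimitive :=
    AddChar.zmodChar_primitive_of_primitive_root p hθ
  simp_rw [hγ.eq_sum_thetaMap_iff hθ1 hθ1' hgen hσ]
  set f : ZMod p → K := fun n => ((γ 1 (AddChar.zmodChar p hθ1' n) : 𝒪 p K) : K) with hf
  have hsum : ∑ n, f n = 0 := by
    have h0 : ∑ n, AddChar.zmodChar p hθ1' n = 0 := by
      have h1 := AddChar.sum_mulShift (1 : ZMod p) hprim
      simp only [mul_one, one_ne_zero, if_false, Nat.cast_zero] at h1
      refine Subtype.ext ?_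
      simpa [AddChar.zmodChar_apply] using h1
    simp only [hf]
    rw [← AddSubmonoidClass.coe_finsetSum, ← map_sum, h0, map_zero, ZeroMemClass.coe_zero]
  have hneg : ∀ n, f (-n) = -(AddChar.zmodChar p hθ1 (-n) * f n) := by
    intro n
    have halt : γ 1 (AddChar.zmodChar p hθ1' (-n)) = -γ (AddChar.zmodChar p hθ1' (-n)) 1 :=
      (LinearMap.IsAlt.neg (B := γ) hγ.1 _ _).symm
    have hmul := hγ.map_pow_mul (-n).val 1 (AddChar.zmodChar p hθ1' n)
    rw [← AddChar.zmodChar_apply hθ1', ← AddChar.map_add_eq_mul, neg_add_cancel,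
      AddChar.map_zero_eq_one, mul_one] at hmul
    simp only [hf]
    rw [halt, hmul]
    simp [AddChar.zmodChar_apply]
  obtain ⟨d, hd⟩ := exists_coeff_of_reflection hodd hprim f hsum hneg
  refine ⟨fun a => if a ∈ Icc 2 ((p - 1) / 2) then d a else 0, ⟨fun a ha => if_neg ha, fun n => ?_⟩,
    fun c ⟨hc0, hc⟩ => ?_⟩
  · refine (hd n).trans (sum_congr rfl fun a ha => ?_)
    simp only [if_pos ha]
  · funext a
    by_cases ha : a ∈ Icc 2 ((p - 1) / 2)
    · have h1 := sum_mul_char_eq_neg_card_mul_coeff hodd hprim (f := f) hc ha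
      have h2 := sum_mul_char_eq_neg_card_mul_coeff hodd hprim (f := f) (c := fun a => d a) hd ha
      have hp0 : (p : K) ≠ 0 := Nat.cast_ne_zero.2 (NeZero.ne p)
      rw [if_pos ha]
      exact mul_left_cancel₀ hp0 (neg_injective (h1.symm.trans h2))
    · rw [hc0 a ha, if_neg ha]

end MaximalClassFrame
end

section
/- Let i ∈ ℕ₀ and let γ ∈ Ĥ_i with J_i(γ) ≠ {0}. Write W_3(i) = 𝔭^{w} and J_i(γ) = 𝔭^{λ}. Then w ≤ λ ≤ w + 2p − 8; in particular 𝔭^{w+2p−8} ⊆ J_i(γ) ⊆ W_3(i). -/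
set_option synthInstance.maxHeartbeats 1000000
set_option maxHeartbeats 1000000

namespace MaximalClassFrame

variable (p : ℕ) [Fact p.Prime]
variable (K : Type) [Field K] [Algebra ℚ_[p] K] [Algebra ℤ_[p] K]
  [IsScalarTower ℤ_[p] ℚ_[p] K]

variable (θ : 𝒪 p K)

variable (γ : 𝒪 p K →ₗ[ℤ_[p]] 𝒪 p K →ₗ[ℤ_[p]] 𝒪 p K)

/-- The ideal `J_i(γ)` of `𝒪` generated by the Jacobi expressions
`γ(γ(x,y),z) + γ(γ(y,z),x) + γ(γ(z,x),y)` for `x, y, z ∈ 𝔭^i`. -/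
noncomputable def Jid (i : ℕ) : Ideal (𝒪 p K) :=
  Ideal.span {v : 𝒪 p K | ∃ x ∈ pid p K θ ^ i, ∃ y ∈ pid p K θ ^ i, ∃ z ∈ pid p K θ ^ i,
    v = γ (γ x y) z + γ (γ y z) x + γ (γ z x) y}

/-- The ideals `W_k(i)`:  `W_1(i) = 𝔭^i` and `W_{k+1}(i)` is the ideal
generated by `{γ(x,y) : x ∈ W_k(i), y ∈ 𝔭^i}`. -/
noncomputable def Wid (i : ℕ) : ℕ → Ideal (𝒪 p K)
  | 0 => ⊤
  | 1 => pid p K θ ^ i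
  | (k + 2) => Ideal.span (Set.image2 (fun x y => γ x y)
      ((Wid i (k + 1) : Ideal (𝒪 p K)) : Set (𝒪 p K))
      ((pid p K θ ^ i : Ideal (𝒪 p K)) : Set (𝒪 p K)))

section Engel

variable {q : ℕ} [Fact q.Prime]

/-- The relation `E a b` behaves like `[e_a, e_b] ≠ 0` in a Lie algebra graded by `ℤ/q` with
components of dimension at most one and trivial component in degree zero. -/
structure IsLieSupport (E : ZMod q → ZMod q → Prop) : Prop where
  symm : ∀ {a b}, E a b → E b a
  irrefl : ∀ a, ¬ E a a
  zero : ∀ a, ¬ E 0 a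
  add_ne : ∀ {a b}, E a b → a + b ≠ 0
  jacobi : ∀ {s t v}, E s v → E t (s + v) → (E t s ∧ E (t + s) v) ∨ (E t v ∧ E s (t + v))

/-- The set `U` of degrees is stable under the action of the degrees in `S`. -/
def StableUnder (E : ZMod q → ZMod q → Prop) (S U : Set (ZMod q)) : Prop :=
  ∀ s ∈ S, ∀ u ∈ U, E s u → s + u ∈ U

variable {E : ZMod q → ZMod q → Prop}

/-- Every nonempty `S` stable under itself has a self-stable `T ⊂ S` whose complement is a
single normalizing degree, provided Engel's theorem holds for all smaller sets. -/
lemma exists_codim_one (hE : IsLieSupport E) (S : Finset (ZMod q))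
    (hS : StableUnder E S S) (hne : S.Nonempty)
    (ih : ∀ T : Finset (ZMod q), T ⊂ S → StableUnder E T T → ∀ U H : Set (ZMod q),
      StableUnder E T U → StableUnder E T H → (∃ v ∈ U, v ∉ H) →
      ∃ v ∈ U, v ∉ H ∧ ∀ s ∈ T, E s v → s + v ∈ H) :
    ∃ T : Finset (ZMod q), T ⊂ S ∧ StableUnder E T T ∧ ∃ s ∈ S, s ∉ T ∧ S = insert s T ∧
      ∀ t ∈ T, E t s → t + s ∈ T := by
  classical
  obtain ⟨T, hT, hmax⟩ := Finset.exists_max_image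
    (S.powerset.filter fun T => T ≠ S ∧ StableUnder E T T) Finset.card
    ⟨∅, by simpa [StableUnder] using hne.ne_empty.symm⟩
  simp only [Finset.mem_filter, Finset.mem_powerset] at hT hmax
  obtain ⟨hTS, hTne, hTst⟩ := hT
  have hss : T ⊂ S := lt_of_le_of_ne hTS hTne
  have hex : ∃ v ∈ (S : Set (ZMod q)), v ∉ (T : Set (ZMod q)) := by
    obtain ⟨v, h1, h2⟩ := Finset.exists_of_ssubset hss
    exact ⟨v, by simpa using h1, by simpa using h2⟩
  obtain ⟨s, hsS, hsT, hs⟩ := ih T hss hTst S T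
    (fun t ht u hu h => hS t (hTS ht) u hu h) hTst hex
  refine ⟨T, hss, hTst, s, hsS, hsT, ?_, hs⟩
  by_contra hne'
  have := hmax (insert s T) ⟨Finset.insert_subset hsS hTS, fun h => hne' h.symm, ?_⟩
  · rw [Finset.card_insert_of_notMem (by simpa using hsT)] at this
    omega
  · intro a ha b hb hab
    simp only [Finset.coe_insert, Set.mem_insert_iff, Finset.mem_coe] at ha hb ⊢
    right
    rcases ha with rfl | ha <;> rcases hb with rfl | hb
    · exact (hE.irrefl _ hab).elim
    · rw [add_comm]
      exact hs b hb (hE.symm hab)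
    · exact hs a ha hab
    · exact hTst a ha b hb hab

/-- Engel's theorem for supports: a nonzero subquotient contains a degree that is annihilated. -/
lemma exists_annihilated (hE : IsLieSupport E) (S : Finset (ZMod q)) :
    StableUnder E S S → ∀ U H : Set (ZMod q),
      StableUnder E S U → StableUnder E S H → (∃ v ∈ U, v ∉ H) →
      ∃ v ∈ U, v ∉ H ∧ ∀ s ∈ S, E s v → s + v ∈ H := by
  induction S using Finset.strongInduction with
  | H S ih =>
  intro hS U H hU hH hex
  rcases S.eq_empty_or_nonempty with rfl | hne
  · obtain ⟨v, h1, h2⟩ := hex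
    exact ⟨v, h1, h2, by simp⟩
  obtain ⟨T, hTS, hT, s, hsS, -, hST, hs⟩ := exists_codim_one hE S hS hne ih
  have hTS' : ∀ t ∈ T, t ∈ S := fun t ht => hTS.1 ht
  obtain ⟨v, hvU, hvH, hv⟩ := ih T hTS hT U H (fun t ht => hU t (hTS' t ht))
    (fun t ht => hH t (hTS' t ht)) hex
  have key : ∀ u, u ∈ U → (∀ t ∈ T, E t u → t + u ∈ H) → E s u →
      s + u ∈ U ∧ ∀ t ∈ T, E t (s + u) → t + (s + u) ∈ H := by
    intro u huU hu hsu
    refine ⟨hU s hsS u huU hsu, fun t ht htu => ?_⟩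
    rcases hE.jacobi hsu htu with ⟨h1, h2⟩ | ⟨h1, h2⟩
    · rw [← add_assoc]
      exact hu _ (hs t ht h1) h2
    · rw [add_left_comm]
      exact hH s hsS _ (hu t ht h1) h2
  by_contra! hcon
  have step : ∀ u, u ∈ U → u ∉ H → (∀ t ∈ T, E t u → t + u ∈ H) → E s u ∧ s + u ∉ H := by
    intro u huU huH hu
    obtain ⟨s', hs', h1, h2⟩ := hcon u huU huH
    rw [hST, Finset.mem_insert] at hs'
    rcases hs' with rfl | hs'
    · exact ⟨h1, h2⟩
    · exact (h2 (hu s' hs' h1)).elim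
  have chain : ∀ k : ℕ, (k * s + v ∈ U) ∧ (k * s + v ∉ H) ∧
      ∀ t ∈ T, E t (k * s + v) → t + (k * s + v) ∈ H := by
    intro k
    induction k with
    | zero => simpa using ⟨hvU, hvH, hv⟩
    | succ k ihk =>
      obtain ⟨h1, h2, h3⟩ := ihk
      obtain ⟨h4, h5⟩ := step _ h1 h2 h3
      obtain ⟨h6, h7⟩ := key _ h1 h3 h4
      have : ((k + 1 : ℕ) : ZMod q) * s + v = s + (k * s + v) := by push_cast; ring
      rw [this]
      exact ⟨h6, h5, h7⟩
  have hs0 : s ≠ 0 := by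
    rintro rfl
    exact hE.zero _ (step v hvU hvH hv).1
  have hk : (((-v / s - 1 : ZMod q).val : ℕ) : ZMod q) * s + v = -s := by
    rw [ZMod.natCast_zmod_val]
    field_simp
    ring
  obtain ⟨h1, h2, h3⟩ := chain (-v / s - 1 : ZMod q).val
  rw [hk] at h1 h2 h3
  exact hE.add_ne (step _ h1 h2 h3).1 (by ring)

/-- A support in which every nonzero degree is a product cannot exist. -/
lemma IsLieSupport.not_perfect (hE : IsLieSupport E) :
    ¬ ∀ n : ZMod q, n ≠ 0 → ∃ a b, a + b = n ∧ E a b := by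
  classical
  intro hperf
  set S : Finset (ZMod q) := Finset.univ.erase 0 with hSdef
  have hmem : ∀ a, a ∈ S ↔ a ≠ 0 := by simp [hSdef]
  have hS : StableUnder E S S := by
    intro a _ b _ hab
    simpa [hmem] using hE.add_ne hab
  obtain ⟨T, -, hT, s, hsS, hsT, hST, hs⟩ := exists_codim_one hE S hS ⟨1, by simp [hSdef]⟩
    fun T _ => exists_annihilated hE T
  obtain ⟨a, b, hab, h⟩ := hperf s ((hmem s).1 hsS)
  have ha : a ∈ S := (hmem a).2 fun h0 => hE.zero b (h0 ▸ h)
  have hb : b ∈ S := (hmem b).2 fun h0 => hE.zero a (h0 ▸ hE.symm h)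
  rw [hST, Finset.mem_insert] at ha hb
  apply hsT
  rw [← hab]
  rcases ha with rfl | ha <;> rcases hb with rfl | hb
  · exact (hE.irrefl _ h).elim
  · rw [add_comm]
    exact hs b hb (hE.symm h)
  · exact hs a ha h
  · exact hT a ha b hb h

end Engel


section StructureConstants

variable {q : ℕ} [Fact q.Prime] {K : Type*} [Field K]

/-- The coefficient of `e_{a+b}` in `[e_a, e_b]`, where `c t` is the coefficient of `e_1` in
`[e_t, e_{1-t}]` and `σ` is the Galois action. -/
def structConst (σ : ZMod q → K →+* K) (c : ZMod q → K) (a b : ZMod q) : K :=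
  if a + b = 0 then 0 else σ (a + b) (c (a / (a + b)))

/-- The coefficient of `e_{a+b+d}` in the Jacobi expression of `e_a, e_b, e_d`. -/
def jacCoeff (C : ZMod q → ZMod q → K) (a b d : ZMod q) : K :=
  C a b * C (a + b) d + C b d * C (b + d) a + C d a * C (d + a) b

lemma jacCoeff_rotate (C : ZMod q → ZMod q → K) (a b d : ZMod q) :
    jacCoeff C b d a = jacCoeff C a b d := by
  unfold jacCoeff
  ring

variable {σ : ZMod q → K →+* K} {c : ZMod q → K}

lemma structConst_of_add_eq_zero {a b : ZMod q} (h : a + b = 0) : structConst σ c a b = 0 :=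
  if_pos h

lemma structConst_of_add_ne_zero {a b : ZMod q} (h : a + b ≠ 0) :
    structConst σ c a b = σ (a + b) (c (a / (a + b))) :=
  if_neg h

lemma structConst_zero_left (hc0 : c 0 = 0) (b : ZMod q) : structConst σ c 0 b = 0 := by
  simp [structConst, hc0]

lemma structConst_swap (hc : ∀ t, c (1 - t) = -c t) (a b : ZMod q) :
    structConst σ c b a = -structConst σ c a b := by
  by_cases h : a + b = 0
  · rw [structConst_of_add_eq_zero h, structConst_of_add_eq_zero (by rwa [add_comm]), neg_zero]
  · have h' : b + a ≠ 0 := by rwa [add_comm]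
    rw [structConst_of_add_ne_zero h, structConst_of_add_ne_zero h', ← map_neg, ← hc, add_comm b a]
    congr 2
    field_simp
    ring

lemma structConst_self [CharZero K] (hc : ∀ t, c (1 - t) = -c t) (a : ZMod q) :
    structConst σ c a a = 0 :=
  self_eq_neg.1 (structConst_swap hc a a)

lemma structConst_zero_right (hc0 : c 0 = 0) (hc : ∀ t, c (1 - t) = -c t) (b : ZMod q) :
    structConst σ c b 0 = 0 := by
  rw [structConst_swap hc, structConst_zero_left hc0, neg_zero]

lemma structConst_mul_mul (hσ : ∀ a b, a ≠ 0 → b ≠ 0 → ∀ x, σ a (σ b x) = σ (a * b) x)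
    {n : ZMod q} (hn : n ≠ 0) (a b : ZMod q) :
    structConst σ c (n * a) (n * b) = σ n (structConst σ c a b) := by
  by_cases h : a + b = 0
  · rw [structConst_of_add_eq_zero h, structConst_of_add_eq_zero (by rw [← mul_add, h, mul_zero]),
      map_zero]
  · have h' : n * a + n * b ≠ 0 := by
      rw [← mul_add]
      exact mul_ne_zero hn h
    rw [structConst_of_add_ne_zero h, structConst_of_add_ne_zero h', hσ _ _ hn h, ← mul_add,
      mul_div_mul_left _ _ hn]

lemma jacCoeff_structConst_mul (hσ : ∀ a b, a ≠ 0 → b ≠ 0 → ∀ x, σ a (σ b x) = σ (a * b) x)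
    {n : ZMod q} (hn : n ≠ 0) (a b d : ZMod q) :
    jacCoeff (structConst σ c) (n * a) (n * b) (n * d) =
      σ n (jacCoeff (structConst σ c) a b d) := by
  simp only [jacCoeff, ← mul_add, structConst_mul_mul hσ hn, map_add, map_mul]

lemma jacCoeff_structConst_of_sum_eq_zero {a b d : ZMod q} (h : a + b + d = 0) :
    jacCoeff (structConst σ c) a b d = 0 := by
  have h1 : b + d + a = 0 := by rw [← h]; ring
  have h2 : d + a + b = 0 := by rw [← h]; ring
  simp [jacCoeff, structConst_of_add_eq_zero h, structConst_of_add_eq_zero h1,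
    structConst_of_add_eq_zero h2]

lemma jacCoeff_structConst_zero (hc0 : c 0 = 0) (hc : ∀ t, c (1 - t) = -c t) (b d : ZMod q) :
    jacCoeff (structConst σ c) 0 b d = 0 := by
  simp [jacCoeff, structConst_zero_left hc0, structConst_zero_right hc0 hc]

lemma jacCoeff_structConst_self [CharZero K] (hc : ∀ t, c (1 - t) = -c t) (a d : ZMod q) :
    jacCoeff (structConst σ c) a a d = 0 := by
  rw [jacCoeff, structConst_self hc, structConst_swap hc a d, add_comm d a]
  ring

/-- The triples of degrees that can contribute to a Jacobi expression of degree one. -/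
structure IsJacobiTriple (a b d : ZMod q) : Prop where
  sum : a + b + d = 1
  left_ne_zero : a ≠ 0
  mid_ne_zero : b ≠ 0
  right_ne_zero : d ≠ 0
  left_ne_mid : a ≠ b
  mid_ne_right : b ≠ d
  right_ne_left : d ≠ a

lemma IsJacobiTriple.rotate {a b d : ZMod q} (h : IsJacobiTriple a b d) :
    IsJacobiTriple b d a where
  sum := by rw [← h.sum]; ring
  left_ne_zero := h.mid_ne_zero
  mid_ne_zero := h.right_ne_zero
  right_ne_zero := h.left_ne_zero
  left_ne_mid := h.mid_ne_right
  mid_ne_right := h.right_ne_left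
  right_ne_left := h.left_ne_mid

lemma isJacobiTriple_of_jacCoeff_ne_zero [CharZero K] (hc0 : c 0 = 0)
    (hc : ∀ t, c (1 - t) = -c t) {a b d : ZMod q} (hsum : a + b + d = 1)
    (h : jacCoeff (structConst σ c) a b d ≠ 0) : IsJacobiTriple a b d where
  sum := hsum
  left_ne_zero := by
    rintro rfl
    exact h (jacCoeff_structConst_zero hc0 hc _ _)
  mid_ne_zero := by
    rintro rfl
    exact h (by rw [← jacCoeff_rotate, jacCoeff_structConst_zero hc0 hc])
  right_ne_zero := by
    rintro rfl
    exact h (by rw [jacCoeff_rotate, jacCoeff_structConst_zero hc0 hc])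
  left_ne_mid := by
    rintro rfl
    exact h (jacCoeff_structConst_self hc _ _)
  mid_ne_right := by
    rintro rfl
    exact h (by rw [← jacCoeff_rotate, jacCoeff_structConst_self hc])
  right_ne_left := by
    rintro rfl
    exact h (by rw [jacCoeff_rotate, jacCoeff_structConst_self hc])

/-- A structure constant of maximal absolute value `M` forces a coefficient of the Jacobi
expression to have absolute value at least `M ^ 2`. -/
lemma exists_le_jacCoeff [CharZero K] (N : AbsoluteValue K ℝ) (hN : IsNonarchimedean N)
    (hσN : ∀ a x, N (σ a x) = N x)
    (hσ : ∀ a b, a ≠ 0 → b ≠ 0 → ∀ x, σ a (σ b x) = σ (a * b) x)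
    (hc0 : c 0 = 0) (hc : ∀ t, c (1 - t) = -c t) {M : ℝ} (hM : 0 < M)
    (hcM : ∀ t, N (c t) ≤ M) (hex : ∃ t, N (c t) = M) :
    ∃ a b d, IsJacobiTriple a b d ∧ M ^ 2 ≤ N (jacCoeff (structConst σ c) a b d) := by
  by_contra! hcon
  have hM2 : 0 < M ^ 2 := by positivity
  have hlt1 : ∀ a b d, a + b + d = 1 → N (jacCoeff (structConst σ c) a b d) < M ^ 2 := by
    intro a b d h
    by_cases h0 : jacCoeff (structConst σ c) a b d = 0
    · rwa [h0, map_zero]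
    · exact hcon a b d (isJacobiTriple_of_jacCoeff_ne_zero hc0 hc h h0)
  have hlt : ∀ a b d, N (jacCoeff (structConst σ c) a b d) < M ^ 2 := by
    intro a b d
    by_cases h : a + b + d = 0
    · rwa [jacCoeff_structConst_of_sum_eq_zero h, map_zero]
    · have key := hlt1 ((a + b + d)⁻¹ * a) ((a + b + d)⁻¹ * b) ((a + b + d)⁻¹ * d)
        (by rw [← mul_add, ← mul_add, inv_mul_cancel₀ h])
      rwa [jacCoeff_structConst_mul hσ (inv_ne_zero h), hσN] at key
  have hCM : ∀ a b, N (structConst σ c a b) ≤ M := by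
    intro a b
    by_cases h : a + b = 0
    · rw [structConst_of_add_eq_zero h, map_zero]
      exact hM.le
    · rw [structConst_of_add_ne_zero h, hσN]
      exact hcM _
  have hne : ∀ {a b}, N (structConst σ c a b) = M → structConst σ c a b ≠ 0 := by
    intro a b h h0
    rw [h0, map_zero] at h
    exact hM.ne h
  have hmul : ∀ a b a' b', M ^ 2 ≤ N (structConst σ c a b * structConst σ c a' b') →
      N (structConst σ c a b) = M ∧ N (structConst σ c a' b') = M := by
    intro a b a' b' h
    rw [map_mul] at h
    have h1 := hCM a b
    have h2 := hCM a' b'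
    have h3 := N.nonneg (structConst σ c a b)
    have h4 := N.nonneg (structConst σ c a' b')
    constructor <;> nlinarith
  have hE : IsLieSupport fun a b => N (structConst σ c a b) = M :=
    { symm := fun {a b} h => by rwa [structConst_swap hc, map_neg_eq_map]
      irrefl := fun a h => hne h (structConst_self hc a)
      zero := fun a h => hne h (structConst_zero_left hc0 a)
      add_ne := fun {a b} h h0 => hne h (structConst_of_add_eq_zero h0)
      jacobi := by
        intro s t v h1 h2
        have h3 := hlt t s v
        have h4 : structConst σ c s v * structConst σ c (s + v) t =
            jacCoeff (structConst σ c) t s v -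
              (structConst σ c t s * structConst σ c (t + s) v +
                structConst σ c v t * structConst σ c (v + t) s) := by
          rw [jacCoeff]
          ring
        have h5 : N (structConst σ c s v * structConst σ c (s + v) t) = M ^ 2 := by
          rw [map_mul, h1, structConst_swap hc, map_neg_eq_map, h2, sq]
        rw [h4, sub_eq_add_neg] at h5
        have h6 := hN (jacCoeff (structConst σ c) t s v)
          (-(structConst σ c t s * structConst σ c (t + s) v +
                structConst σ c v t * structConst σ c (v + t) s))
        rw [h5, map_neg_eq_map, le_max_iff] at h6
        rcases h6 with h6 | h6
        · linarith
        rcases le_max_iff.1 (h6.trans (hN _ _)) with h7 | h7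
        · exact Or.inl (hmul _ _ _ _ h7)
        · obtain ⟨h8, h9⟩ := hmul _ _ _ _ h7
          right
          rw [add_comm t v, structConst_swap hc v t, map_neg_eq_map,
            structConst_swap hc (v + t) s, map_neg_eq_map]
          exact ⟨h8, h9⟩ }
  refine hE.not_perfect fun n hn => ?_
  obtain ⟨t, ht⟩ := hex
  have hsum : n * t + n * (1 - t) = n := by ring
  refine ⟨n * t, n * (1 - t), hsum, ?_⟩
  rw [structConst_of_add_ne_zero (by rwa [hsum]), hσN, hsum, mul_div_cancel_left₀ _ hn, ht]

/-- Evaluating a nested bracket through its structure constants. -/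
lemma bracket_bracket_eq (hσ : ∀ a b, a ≠ 0 → b ≠ 0 → ∀ x, σ a (σ b x) = σ (a * b) x)
    (hσ1 : ∀ x, σ 1 x = x) (hc0 : c 0 = 0) (hc : ∀ t, c (1 - t) = -c t) (x y z : K) :
    ∑ s, c s * σ s (∑ t, c t * σ t x * σ (1 - t) y) * σ (1 - s) z =
      ∑ a, ∑ b, structConst σ c a b * structConst σ c (a + b) (1 - a - b) *
        (σ a x * σ b y * σ (1 - a - b) z) := by
  have hc1 : c 1 = 0 := by
    have := hc 0
    rwa [sub_zero, hc0, neg_zero] at this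
  have hrhs : ∑ a, ∑ b, structConst σ c a b * structConst σ c (a + b) (1 - a - b) *
        (σ a x * σ b y * σ (1 - a - b) z) =
      ∑ s, ∑ a, structConst σ c a (s - a) * structConst σ c s (1 - s) *
        (σ a x * σ (s - a) y * σ (1 - s) z) := by
    rw [Finset.sum_comm (s := (Finset.univ : Finset (ZMod q))) (t := Finset.univ)
      (f := fun s a => structConst σ c a (s - a) * structConst σ c s (1 - s) *
        (σ a x * σ (s - a) y * σ (1 - s) z))]
    refine Finset.sum_congr rfl fun a _ => ?_
    refine Fintype.sum_equiv (Equiv.addLeft a) _ _ fun b => ?_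
    simp only [Equiv.coe_addLeft, add_sub_cancel_left, sub_sub]
  rw [hrhs]
  refine Finset.sum_congr rfl fun s _ => ?_
  by_cases hs : s = 0
  · subst hs
    simp [hc0, structConst_zero_left hc0]
  rw [map_sum, Finset.mul_sum, Finset.sum_mul]
  refine Fintype.sum_equiv (Equiv.mulLeft₀ s hs) _ _ fun t => ?_
  have h1 : s * t + (s - s * t) = s := by ring
  have h2 : s + (1 - s) = 1 := by ring
  rw [Equiv.mulLeft₀_apply, structConst_of_add_ne_zero (by rwa [h1]),
    structConst_of_add_ne_zero (by rw [h2]; exact one_ne_zero), h1, h2, hσ1, div_one,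
    mul_div_cancel_left₀ _ hs]
  by_cases ht : t = 0
  · simp [ht, hc0]
  by_cases ht1 : 1 - t = 0
  · rw [← sub_eq_zero.1 ht1]
    simp [hc1]
  rw [map_mul, map_mul, hσ s t hs ht, hσ s (1 - t) hs ht1, mul_sub, mul_one]
  ring

/-- The Jacobi expression as a combination of the triple products of Galois conjugates. -/
lemma jacobi_eq_sum (hσ : ∀ a b, a ≠ 0 → b ≠ 0 → ∀ x, σ a (σ b x) = σ (a * b) x)
    (hσ1 : ∀ x, σ 1 x = x) (hc0 : c 0 = 0) (hc : ∀ t, c (1 - t) = -c t)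
    {Γ : K → K → K} (hΓ : ∀ x y, Γ x y = ∑ t, c t * σ t x * σ (1 - t) y) (x y z : K) :
    Γ (Γ x y) z + Γ (Γ y z) x + Γ (Γ z x) y =
      ∑ a, ∑ b, jacCoeff (structConst σ c) a b (1 - a - b) *
        (σ a x * σ b y * σ (1 - a - b) z) := by
  have h : ∀ x y z, Γ (Γ x y) z = ∑ a, ∑ b, structConst σ c a b *
      structConst σ c (a + b) (1 - a - b) * (σ a x * σ b y * σ (1 - a - b) z) := by
    intro x y z
    rw [hΓ (Γ x y) z, hΓ x y, bracket_bracket_eq hσ hσ1 hc0 hc]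
  have hrot : ∀ F : ZMod q → ZMod q → ZMod q → K,
      ∑ a, ∑ b, F a b (1 - a - b) = ∑ a, ∑ b, F b (1 - a - b) a := by
    intro F
    conv_rhs => rw [Finset.sum_comm]
    refine Finset.sum_congr rfl fun a _ => ?_
    refine Fintype.sum_equiv (Equiv.subLeft (1 - a)) _ _ fun b => ?_
    rw [Equiv.subLeft_apply]
    congr 1
    ring
  rw [h x y z, h y z x, h z x y]
  rw [hrot fun a b d => structConst σ c a b * structConst σ c (a + b) d * (σ a y * σ b z * σ d x),
    hrot fun a b d => structConst σ c a b * structConst σ c (a + b) d * (σ a z * σ b x * σ d y),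
    hrot fun a b d => structConst σ c b d * structConst σ c (b + d) a * (σ b z * σ d x * σ a y)]
  simp only [← Finset.sum_add_distrib]
  refine Finset.sum_congr rfl fun a _ => Finset.sum_congr rfl fun b _ => ?_
  rw [jacCoeff]
  ring

end StructureConstants

section Separation

variable {q : ℕ} [Fact q.Prime] {K : Type*} [Field K]
  {σ : ZMod q → K →+* K} {ψ : AddChar (ZMod q) K}

/-- Removing the characters in `A` from a bounded combination of Galois conjugates. -/
lemma norm_sum_mul_prod_le (N : AbsoluteValue K ℝ) (hN : IsNonarchimedean N)
    (hψ : ∀ a, a ≠ 0 → σ a (ψ 1) = ψ a) (hψN : ∀ a, N (ψ a) = 1)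
    {S : Set K} (hS : ∀ x ∈ S, ψ 1 * x ∈ S) {f : ZMod q → K} (hf : f 0 = 0) {B : ℝ}
    (hB : ∀ x ∈ S, N (∑ a, f a * σ a x) ≤ B) (A : Finset (ZMod q)) :
    ∀ x ∈ S, N (∑ a, f a * (∏ a' ∈ A, (ψ a - ψ a')) * σ a x) ≤ B := by
  classical
  induction A using Finset.induction_on with
  | empty => simpa using hB
  | insert a₀ A ha₀ ih =>
    intro x hx
    have h : ∑ a, f a * (∏ a' ∈ insert a₀ A, (ψ a - ψ a')) * σ a x =
        ∑ a, f a * (∏ a' ∈ A, (ψ a - ψ a')) * σ a (ψ 1 * x) +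
          -(ψ a₀ * ∑ a, f a * (∏ a' ∈ A, (ψ a - ψ a')) * σ a x) := by
      rw [Finset.mul_sum, ← Finset.sum_neg_distrib, ← Finset.sum_add_distrib]
      refine Finset.sum_congr rfl fun a _ => ?_
      by_cases ha : a = 0
      · simp [ha, hf]
      · rw [Finset.prod_insert ha₀, map_mul, hψ a ha]
        ring
    rw [h]
    refine (hN _ _).trans (max_le (ih _ (hS x hx)) ?_)
    rw [map_neg_eq_map, map_mul, hψN, one_mul]
    exact ih x hx

/-- A lower bound for the Jacobi expressions in terms of a single coefficient, given sets `A` and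
`D` of characters whose removal isolates this coefficient. -/
lemma norm_coeff_le (N : AbsoluteValue K ℝ) (hN : IsNonarchimedean N)
    (hσN : ∀ a x, N (σ a x) = N x)
    (hψ : ∀ a, a ≠ 0 → σ a (ψ 1) = ψ a) (hψN : ∀ a, N (ψ a) = 1) {ρ : ℝ}
    (hρ : ∀ a b, a ≠ b → N (ψ a - ψ b) = ρ)
    {S : Set K} (hS : ∀ x ∈ S, ψ 1 * x ∈ S) {z : K} (hz : z ∈ S)
    {g : ZMod q → ZMod q → ZMod q → K}
    (hg : ∀ a b d, a + b + d = 1 → g a b d ≠ 0 → IsJacobiTriple a b d) {B : ℝ}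
    (hB : ∀ x ∈ S, ∀ y ∈ S, ∀ z ∈ S,
      N (∑ a, ∑ b, g a b (1 - a - b) * (σ a x * σ b y * σ (1 - a - b) z)) ≤ B)
    {a b d : ZMod q} (habd : IsJacobiTriple a b d) (A D : Finset (ZMod q))
    (ha : a ∉ A) (hb : b ∉ D)
    (hAD : ∀ a' b' d', IsJacobiTriple a' b' d' → (a' = a ∧ b' = b) ∨ a' ∈ A ∨ b' ∈ D) :
    N (g a b d) * ρ ^ (A.card + D.card) * N z ^ 3 ≤ B := by
  have hg0 : ∀ b, g 0 b (1 - 0 - b) = 0 := fun b => by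
    by_contra h
    exact (hg 0 b _ (by ring) h).left_ne_zero rfl
  have hg0' : ∀ a, g a 0 (1 - a - 0) = 0 := fun a => by
    by_contra h
    exact (hg a 0 _ (by ring) h).mid_ne_zero rfl
  have h1 : ∀ y ∈ S, ∀ x ∈ S, N (∑ a, (∑ b, g a b (1 - a - b) * (σ b y * σ (1 - a - b) z)) *
      (∏ a' ∈ A, (ψ a - ψ a')) * σ a x) ≤ B := by
    intro y hy
    refine norm_sum_mul_prod_le N hN hψ hψN hS ?_ (fun x hx => ?_) A
    · exact Finset.sum_eq_zero fun b _ => by rw [hg0, zero_mul]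
    · convert! hB x hx y hy z hz using 2
      refine Finset.sum_congr rfl fun a _ => ?_
      rw [Finset.sum_mul]
      refine Finset.sum_congr rfl fun b _ => ?_
      ring
  have h2 : ∀ y ∈ S, N (∑ b, (∑ a, g a b (1 - a - b) * σ (1 - a - b) z *
      (∏ a' ∈ A, (ψ a - ψ a')) * σ a z) * (∏ b' ∈ D, (ψ b - ψ b')) * σ b y) ≤ B := by
    refine norm_sum_mul_prod_le N hN hψ hψN hS ?_ (fun y hy => ?_) D
    · exact Finset.sum_eq_zero fun a _ => by rw [hg0']; ring
    · convert! h1 y hy z hz using 2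
      simp only [Finset.sum_mul]
      rw [Finset.sum_comm]
      refine Finset.sum_congr rfl fun a _ => Finset.sum_congr rfl fun b _ => ?_
      ring
  have hzero : ∀ (e : ZMod q) (X : Finset (ZMod q)), e ∈ X → ∏ e' ∈ X, (ψ e - ψ e') = 0 :=
    fun e X h => Finset.prod_eq_zero h (sub_self (ψ e))
  have h3 := h2 z hz
  rw [Finset.sum_eq_single b, Finset.sum_eq_single a] at h3
  · have hd : 1 - a - b = d := by rw [← habd.sum]; ring
    have hprod : ∀ (e : ZMod q) (X : Finset (ZMod q)), e ∉ X →
        N (∏ e' ∈ X, (ψ e - ψ e')) = ρ ^ X.card := by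
      intro e X he
      rw [map_prod, Finset.prod_congr rfl fun e' he' => hρ e e' (by rintro rfl; exact he he'),
        Finset.prod_const]
    rw [hd] at h3
    simp only [map_mul, hσN, hprod a A ha, hprod b D hb] at h3
    refine le_of_eq_of_le ?_ h3
    ring
  · intro a' _ ha'
    by_cases h0 : g a' b (1 - a' - b) = 0
    · rw [h0]; ring
    rcases hAD _ _ _ (hg _ _ _ (by ring) h0) with h | h | h
    · exact absurd h.1 ha'
    · rw [hzero _ _ h]; ring
    · exact absurd h hb
  · simp
  · intro b' _ hb'
    rw [Finset.sum_mul, Finset.sum_mul]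
    refine Finset.sum_eq_zero fun a' _ => ?_
    by_cases h0 : g a' b' (1 - a' - b') = 0
    · rw [h0]; ring
    rcases hAD _ _ _ (hg _ _ _ (by ring) h0) with h | h | h
    · exact absurd h.2 hb'
    · rw [hzero _ _ h]; ring
    · rw [hzero _ _ h]; ring
  · simp

/-- For a first degree in general position few characters have to be removed. -/
lemma exists_separating_of_generic (h2 : (2 : ZMod q) ≠ 0)
    {a b d : ZMod q} (habd : IsJacobiTriple a b d)
    (ha1 : a ≠ 1) (ha2 : 2 * a ≠ 1) (ha3 : 3 * a ≠ 1) :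
    ∃ A D : Finset (ZMod q), a ∉ A ∧ b ∉ D ∧ A.card + D.card + 8 = 2 * q ∧
      ∀ a' b' d', IsJacobiTriple a' b' d' → (a' = a ∧ b' = b) ∨ a' ∈ A ∨ b' ∈ D := by
  classical
  have ha0 := habd.left_ne_zero
  set R : Finset (ZMod q) := {0, a, 1 - a, 1 - 2 * a, (1 - a) / 2} with hR
  have hexcl : ∀ b' d', IsJacobiTriple a b' d' → b' ∉ R := by
    intro b' d' h hmem
    have hd' : d' = 1 - a - b' := by rw [← h.sum]; ring
    simp only [hR, Finset.mem_insert, Finset.mem_singleton] at hmem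
    rcases hmem with rfl | rfl | rfl | rfl | rfl
    · exact h.mid_ne_zero rfl
    · exact h.left_ne_mid rfl
    · exact h.right_ne_zero (by rw [hd']; ring)
    · exact h.right_ne_left (by rw [hd']; ring)
    · refine h.mid_ne_right ?_
      rw [hd']
      field_simp
      ring
  have hcard : R.card = 5 := by
    have e1 : (0 : ZMod q) ≠ 1 - a := fun h => ha1 (by linear_combination h)
    have e2 : (0 : ZMod q) ≠ 1 - 2 * a := fun h => ha2 (by linear_combination h)
    have e3 : (0 : ZMod q) ≠ (1 - a) / 2 := fun h => ha1 (by
      rw [eq_div_iff h2] at h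
      linear_combination h)
    have e4 : a ≠ 1 - a := fun h => ha2 (by linear_combination h)
    have e5 : a ≠ 1 - 2 * a := fun h => ha3 (by linear_combination h)
    have e6 : a ≠ (1 - a) / 2 := fun h => ha3 (by
      rw [eq_div_iff h2] at h
      linear_combination h)
    have e7 : 1 - a ≠ 1 - 2 * a := fun h => ha0 (by linear_combination h)
    have e8 : 1 - a ≠ (1 - a) / 2 := fun h => ha1 (by
      rw [eq_div_iff h2] at h
      linear_combination -h)
    have e9 : 1 - 2 * a ≠ (1 - a) / 2 := fun h => ha3 (by
      rw [eq_div_iff h2] at h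
      linear_combination -h)
    rw [hR, Finset.card_insert_of_notMem (by simp [ha0.symm, e1, e2, e3]),
      Finset.card_insert_of_notMem (by simp [e4, e5, e6]),
      Finset.card_insert_of_notMem (by simp [e7, e8]),
      Finset.card_insert_of_notMem (by simp [e9]), Finset.card_singleton]
  have hbR : b ∈ Rᶜ := Finset.mem_compl.2 (hexcl b d habd)
  refine ⟨(Finset.univ.erase 0).erase a, Rᶜ.erase b, by simp, by simp, ?_, ?_⟩
  · have hle : 0 < (Rᶜ).card := Finset.card_pos.2 ⟨b, hbR⟩
    rw [Finset.card_erase_of_mem (by simpa using ha0), Finset.card_erase_of_mem (by simp),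
      Finset.card_erase_of_mem hbR]
    rw [Finset.card_compl, ZMod.card, hcard] at hle ⊢
    rw [Finset.card_univ, ZMod.card]
    omega
  · intro a' b' d' h
    by_cases ha' : a' = a
    · subst ha'
      by_cases hb' : b' = b
      · exact Or.inl ⟨rfl, hb'⟩
      · exact Or.inr (Or.inr (by simpa [hb'] using hexcl b' d' h))
    · exact Or.inr (Or.inl (by simpa [ha'] using h.left_ne_zero))

lemma jacobiTriple_mod_five : ∀ a b d : ZMod 5, a + b + d = 1 → a ≠ 0 → b ≠ 0 → d ≠ 0 → a ≠ b →
    b ≠ d → d ≠ a → (a = 1 ∨ a = 2 ∨ a = 3) ∧ (b = 1 ∨ b = 2 ∨ b = 3) := by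
  decide

/-- Up to rotation a Jacobi triple is isolated by removing at most `2 * q - 7` characters. -/
lemma exists_separating (hq : 5 ≤ q) {a b d : ZMod q} (habd : IsJacobiTriple a b d) :
    ∃ a₁ b₁ d₁, ((a₁, b₁, d₁) = (a, b, d) ∨ (a₁, b₁, d₁) = (b, d, a) ∨
      (a₁, b₁, d₁) = (d, a, b)) ∧
    ∃ A D : Finset (ZMod q), a₁ ∉ A ∧ b₁ ∉ D ∧ A.card + D.card + 7 ≤ 2 * q ∧
      ∀ a' b' d', IsJacobiTriple a' b' d' → (a' = a₁ ∧ b' = b₁) ∨ a' ∈ A ∨ b' ∈ D := by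
  rcases hq.eq_or_lt with rfl | hq
  · refine ⟨a, b, d, Or.inl rfl, ({1, 2, 3} : Finset (ZMod 5)).erase a,
      (({1, 2, 3} : Finset (ZMod 5)).erase a).erase b, by simp, by simp, ?_, ?_⟩
    · have hcard : ({1, 2, 3} : Finset (ZMod 5)).card = 3 := rfl
      obtain ⟨ha, hb⟩ := jacobiTriple_mod_five a b d habd.1 habd.2 habd.3 habd.4 habd.5 habd.6
        habd.7
      rw [Finset.card_erase_of_mem 
          (Finset.mem_erase.2 ⟨habd.left_ne_mid.symm, by simpa using hb⟩),
        Finset.card_erase_of_mem (by simpa using ha), hcard]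
    · rintro a' b' d' ⟨h1, h2, h3, h4, h5, h6, h7⟩
      obtain ⟨ha', hb'⟩ := jacobiTriple_mod_five a' b' d' h1 h2 h3 h4 h5 h6 h7
      simp only [Finset.mem_erase, Finset.mem_insert, Finset.mem_singleton]
      by_cases e1 : a' = a
      · by_cases e2 : b' = b
        · exact Or.inl ⟨e1, e2⟩
        · exact Or.inr (Or.inr ⟨e2, e1 ▸ h5.symm, hb'⟩)
      · exact Or.inr (Or.inl ⟨e1, ha'⟩)
  · have hprime : q.Prime := Fact.out
    have hcast : ∀ n : ℕ, 0 < n → n < q → (n : ZMod q) ≠ 0 := fun n h0 h1 h =>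
      (Nat.le_of_dvd h0 ((ZMod.natCast_eq_zero_iff _ _).1 h)).not_gt h1
    have h2 : (2 : ZMod q) ≠ 0 := by exact_mod_cast hcast 2 (by omega) (by omega)
    have h3 : (3 : ZMod q) ≠ 0 := by exact_mod_cast hcast 3 (by omega) (by omega)
    have h5 : (5 : ZMod q) ≠ 0 := by exact_mod_cast hcast 5 (by omega) (by omega)
    by_cases ha : a ≠ 1 ∧ 2 * a ≠ 1 ∧ 3 * a ≠ 1
    · obtain ⟨A, D, hA, hD, hc, h⟩ := exists_separating_of_generic h2 habd ha.1 ha.2.1 ha.2.2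
      exact ⟨a, b, d, Or.inl rfl, A, D, hA, hD, by omega, h⟩
    by_cases hb : b ≠ 1 ∧ 2 * b ≠ 1 ∧ 3 * b ≠ 1
    · obtain ⟨A, D, hA, hD, hc, h⟩ :=
        exists_separating_of_generic h2 habd.rotate hb.1 hb.2.1 hb.2.2
      exact ⟨b, d, a, Or.inr (Or.inl rfl), A, D, hA, hD, by omega, h⟩
    by_cases hd : d ≠ 1 ∧ 2 * d ≠ 1 ∧ 3 * d ≠ 1
    · obtain ⟨A, D, hA, hD, hc, h⟩ :=
        exists_separating_of_generic h2 habd.rotate.rotate hd.1 hd.2.1 hd.2.2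
      exact ⟨d, a, b, Or.inr (Or.inr rfl), A, D, hA, hD, by omega, h⟩
    exfalso
    have hinj2 : ∀ x y : ZMod q, 2 * x = 1 → 2 * y = 1 → x = y := fun x y hx hy =>
      mul_left_cancel₀ h2 (hx.trans hy.symm)
    have hinj3 : ∀ x y : ZMod q, 3 * x = 1 → 3 * y = 1 → x = y := fun x y hx hy =>
      mul_left_cancel₀ h3 (hx.trans hy.symm)
    have hsum : ∀ x y z : ZMod q, x + y + z = 1 → x = 1 → 2 * y = 1 → 3 * z = 1 → False :=
      fun x y z h hx hy hz => h5 (by linear_combination 6 * h - 6 * hx - 3 * hy - 2 * hz)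
    have hs := habd.sum
    have n1 := habd.left_ne_mid
    have n2 := habd.mid_ne_right
    have n3 := habd.right_ne_left
    have ha' : a = 1 ∨ 2 * a = 1 ∨ 3 * a = 1 := by tauto
    have hb' : b = 1 ∨ 2 * b = 1 ∨ 3 * b = 1 := by tauto
    have hd' : d = 1 ∨ 2 * d = 1 ∨ 3 * d = 1 := by tauto
    rcases ha' with ha' | ha' | ha' <;> rcases hb' with hb' | hb' | hb' <;>
      rcases hd' with hd' | hd' | hd'
    all_goals first
      | exact n1 (ha'.trans hb'.symm)
      | exact n2 (hb'.trans hd'.symm)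
      | exact n3 (hd'.trans ha'.symm)
      | exact n1 (hinj2 _ _ ha' hb')
      | exact n2 (hinj2 _ _ hb' hd')
      | exact n3 (hinj2 _ _ hd' ha')
      | exact n1 (hinj3 _ _ ha' hb')
      | exact n2 (hinj3 _ _ hb' hd')
      | exact n3 (hinj3 _ _ hd' ha')
      | exact hsum a b d hs ‹_› ‹_› ‹_›
      | exact hsum a d b (by rw [← hs]; ring) ‹_› ‹_› ‹_›
      | exact hsum b a d (by rw [← hs]; ring) ‹_› ‹_› ‹_›
      | exact hsum b d a (by rw [← hs]; ring) ‹_› ‹_› ‹_›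
      | exact hsum d a b (by rw [← hs]; ring) ‹_› ‹_› ‹_›
      | exact hsum d b a (by rw [← hs]; ring) ‹_› ‹_› ‹_›

end Separation

section Cyclotomic

open Polynomial

variable {p : ℕ} [Fact p.Prime]

lemma cyclotomic_padicInt_comp_isEisensteinAt :
    ((cyclotomic p ℤ_[p]).comp (X + 1)).IsEisensteinAt (Submodule.span ℤ_[p] {(p : ℤ_[p])}) := by
  have hE := cyclotomic_comp_X_add_one_isEisensteinAt p
  have hmap : (cyclotomic p ℤ_[p]).comp (X + 1) =
      ((cyclotomic p ℤ).comp (X + 1)).map (Int.castRingHom ℤ_[p]) := by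
    rw [Polynomial.map_comp, map_cyclotomic, Polynomial.map_add, map_X, Polynomial.map_one]
  have hmonic : ((cyclotomic p ℤ).comp (X + 1)).Monic := by
    rw [show (X + 1 : ℤ[X]) = X + C 1 by simp]
    exact (cyclotomic.monic p ℤ).comp_X_add_C 1
  rw [hmap]
  refine (hmonic.map _).isEisensteinAt_of_mem_of_notMem ?_ (fun {n} hn => ?_) ?_
  · exact Ideal.IsPrime.ne_top
      ((Ideal.span_singleton_prime PadicInt.prime_p.ne_zero).2 PadicInt.prime_p)
  · rw [hmonic.natDegree_map] at hn
    have := hE.mem hn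
    rw [Ideal.submodule_span_eq, Ideal.mem_span_singleton] at this ⊢
    obtain ⟨k, hk⟩ := this
    rw [coeff_map, hk]
    exact ⟨(k : ℤ_[p]), by simp⟩
  · have h0 : ((cyclotomic p ℤ).comp (X + 1)).coeff 0 = p := by
      rw [coeff_zero_eq_eval_zero, eval_comp, cyclotomic_prime]
      simp [eval_geom_sum]
    rw [coeff_map, h0, Ideal.submodule_span_eq, Ideal.span_singleton_pow,
      Ideal.mem_span_singleton]
    rintro ⟨k, hk⟩
    have hp0 : (p : ℤ_[p]) ≠ 0 := PadicInt.prime_p.ne_zero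
    refine (PadicInt.prime_p (p := p)).not_isUnit (IsUnit.of_mul_eq_one k ?_)
    refine mul_left_cancel₀ hp0 ?_
    rw [← mul_assoc, ← sq, ← hk]
    simp

lemma cyclotomic_padic_irreducible : Irreducible (cyclotomic p ℚ_[p]) := by
  have hmonic : ((cyclotomic p ℤ_[p]).comp (X + 1)).Monic := by
    rw [show (X + 1 : ℤ_[p][X]) = X + C 1 by simp]
    exact (cyclotomic.monic p _).comp_X_add_C 1
  have h : Irreducible ((cyclotomic p ℤ_[p]).comp (X + 1)) := by
    refine cyclotomic_padicInt_comp_isEisensteinAt.irreducible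
      ((Ideal.span_singleton_prime PadicInt.prime_p.ne_zero).2 PadicInt.prime_p)
      hmonic.isPrimitive ?_
    rw [show (X + 1 : ℤ_[p][X]) = X + C 1 by simp, natDegree_comp, natDegree_X_add_C, mul_one,
      natDegree_cyclotomic]
    exact Nat.totient_pos.2 (Fact.out : p.Prime).pos
  have h' : Irreducible (cyclotomic p ℤ_[p]) := by
    have := (MulEquiv.irreducible_iff (algEquivAevalXAddC (1 : ℤ_[p]))
      (x := cyclotomic p ℤ_[p])).1
    apply this
    simpa [algEquivAevalXAddC, aeval_def, comp, algebraMap_eq] using h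
  rw [← map_cyclotomic p (algebraMap ℤ_[p] ℚ_[p])]
  exact ((cyclotomic.monic p _).irreducible_iff_irreducible_map_fraction_map).1 h'

variable {L : Type*} [Field L] [Algebra ℚ_[p] L] {ζ : L}

lemma isCyclotomicExtension_of_adjoin_eq_top (hζ : IsPrimitiveRoot ζ p)
    (hgen : Algebra.adjoin ℚ_[p] {ζ} = ⊤) : IsCyclotomicExtension {p} ℚ_[p] L := by
  rw [IsCyclotomicExtension.iff_singleton]
  refine ⟨⟨ζ, hζ⟩, fun x => ?_⟩
  have hx : x ∈ Algebra.adjoin ℚ_[p] {ζ} := hgen ▸ Algebra.mem_top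
  exact Algebra.adjoin_mono (by simpa using hζ.pow_eq_one) hx

/-- The elements `e` of `ℤ/p` act on the `p`-th cyclotomic extension of `ℚ_p` as
`ζ ↦ ζ ^ e`, if `e` is nonzero. -/
lemma exists_galois_action [IsCyclotomicExtension {p} ℚ_[p] L] (hζ : IsPrimitiveRoot ζ p) :
    ∃ σ : ZMod p → Gal(L/ℚ_[p]), (∀ a, a ≠ 0 → σ a ζ = ζ ^ a.val) ∧ (∀ x, σ 1 x = x) ∧
      ∀ a b, a ≠ 0 → b ≠ 0 → ∀ x, σ a (σ b x) = σ (a * b) x := by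
  have : NeZero p := ⟨(Fact.out : p.Prime).ne_zero⟩
  classical
  let e := IsCyclotomicExtension.autEquivPow L (cyclotomic_padic_irreducible (p := p))
  have he : ∀ (u : (ZMod p)ˣ) (a : ZMod p), u = a → e.symm u ζ = ζ ^ a.val := by
    rintro u _ rfl
    obtain ⟨k, -, hk⟩ :=
      (IsCyclotomicExtension.zeta_spec p ℚ_[p] L).eq_pow_of_pow_eq_one hζ.pow_eq_one
    have h := (IsCyclotomicExtension.zeta_spec p ℚ_[p] L).autToPow_spec ℚ_[p] (e.symm u)
    have h2 : (IsCyclotomicExtension.zeta_spec p ℚ_[p] L).autToPow ℚ_[p] (e.symm u) = u :=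
      e.apply_symm_apply u
    rw [h2] at h
    rw [← hk, map_pow, ← h, ← pow_mul, ← pow_mul, mul_comm]
  refine ⟨fun a => if h : a = 0 then 1 else e.symm (Units.mk0 a h), fun a ha => ?_, fun x => ?_,
    fun a b ha hb x => ?_⟩
  · simp only [ha, dite_false]
    exact he _ _ rfl
  · have : (Units.mk0 (1 : ZMod p) one_ne_zero) = 1 := by ext; rfl
    simp [this]
  · have : Units.mk0 (a * b) (mul_ne_zero ha hb) = Units.mk0 a ha * Units.mk0 b hb := by
      ext; rfl
    simp only [ha, hb, mul_ne_zero ha hb, dite_false, this, map_mul, AlgEquiv.mul_apply]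

end Cyclotomic

section Integers

open Polynomial

variable {p : ℕ} [Fact p.Prime] {L : Type*} [Field L] [Algebra ℚ_[p] L] [Algebra ℤ_[p] L]
  [IsScalarTower ℤ_[p] ℚ_[p] L] {ζ : L}

/-- The absolute value of an algebraic extension of `ℚ_p`, its valuation ring being the integral
closure of `ℤ_p`. -/
lemma exists_absoluteValue [Algebra.IsAlgebraic ℚ_[p] L] :
    ∃ N : AbsoluteValue L ℝ, IsNonarchimedean N ∧ (∀ (σ : Gal(L/ℚ_[p])) x, N (σ x) = N x) ∧
      (∀ x, N x ≤ 1 ↔ IsIntegral ℤ_[p] x) ∧ ∀ k : ℚ_[p], N (algebraMap ℚ_[p] L k) = ‖k‖ := by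
  have hna : IsNonarchimedean (spectralNorm ℚ_[p] L) := isNonarchimedean_spectralNorm
  refine ⟨⟨⟨spectralNorm ℚ_[p] L, spectralAlgNorm_mul⟩, spectralNorm_nonneg,
    fun x => ⟨fun hx => eq_zero_of_map_spectralNorm_eq_zero hx
      (Algebra.IsAlgebraic.isAlgebraic x), fun hx => by subst hx; exact spectralNorm_zero⟩,
    fun x y => (hna x y).trans (max_le_add_of_nonneg (spectralNorm_nonneg x)
      (spectralNorm_nonneg y))⟩, hna, fun σ x => (spectralNorm_eq_of_equiv σ x).symm,
    fun x => ?_, spectralNorm_extends⟩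
  change spectralValue (minpoly ℚ_[p] x) ≤ 1 ↔ _
  have hx : IsIntegral ℚ_[p] x := Algebra.IsIntegral.isIntegral x
  rw [spectralValue_le_one_iff (minpoly.monic hx)]
  constructor
  · intro h
    have hlift : minpoly ℚ_[p] x ∈ lifts (algebraMap ℤ_[p] ℚ_[p]) := by
      rw [lifts_iff_coeff_lifts]
      exact fun n => ⟨⟨_, h n⟩, rfl⟩
    obtain ⟨P, hP, -, hPm⟩ := lifts_and_natDegree_eq_and_monic hlift (minpoly.monic hx)
    refine ⟨P, hPm, ?_⟩
    rw [← aeval_def, ← aeval_map_algebraMap ℚ_[p], hP, minpoly.aeval]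
  · intro h n
    rw [minpoly.isIntegrallyClosed_eq_field_fractions' ℚ_[p] h, coeff_map]
    exact PadicInt.norm_le_one _

/-- The integral elements of the `p`-th cyclotomic extension of `ℚ_p` are the polynomials in
`ζ - 1`. -/
lemma mem_adjoin_of_isIntegral [IsCyclotomicExtension {p} ℚ_[p] L] (hζ : IsPrimitiveRoot ζ p)
    {x : L} (hx : IsIntegral ℤ_[p] x) : x ∈ Algebra.adjoin ℤ_[p] {ζ - 1} := by
  have hpr : p.Prime := Fact.out
  have : NeZero p := ⟨hpr.ne_zero⟩
  classical
  let B := hζ.subOnePowerBasis ℚ_[p]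
  have hBgen : B.gen = ζ - 1 := hζ.subOnePowerBasis_gen ℚ_[p]
  have hint : IsIntegral ℤ_[p] (ζ - 1) := (hζ.isIntegral hpr.pos).tower_top.sub isIntegral_one
  have hmin : minpoly ℤ_[p] (ζ - 1) = (cyclotomic p ℤ_[p]).comp (X + 1) := by
    have h₁ := minpoly.isIntegrallyClosed_eq_field_fractions' ℚ_[p] hint
    have h₂ := hζ.minpoly_sub_one_eq_cyclotomic_comp (cyclotomic_padic_irreducible (p := p))
    rw [h₁, ← map_cyclotomic p (algebraMap ℤ_[p] ℚ_[p]),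
      show (X + 1 : ℚ_[p][X]) = Polynomial.map (algebraMap ℤ_[p] ℚ_[p]) (X + 1) by simp,
      ← Polynomial.map_comp] at h₂
    exact map_injective (algebraMap ℤ_[p] ℚ_[p]) (IsFractionRing.injective _ _) h₂
  obtain ⟨⟨b, hb⟩, hbx⟩ := IsLocalization.exist_integer_multiples_of_finset
    (nonZeroDivisors ℤ_[p]) (Finset.univ.image fun j => B.basis.repr x j)
  have hb0 : b ≠ 0 := nonZeroDivisors.ne_zero hb
  have hbmem : b • x ∈ Algebra.adjoin ℤ_[p] {ζ - 1} := by
    rw [← B.basis.sum_repr x, Finset.smul_sum]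
    refine Subalgebra.sum_mem _ fun j _ => ?_
    obtain ⟨r, hr⟩ := hbx (B.basis.repr x j) (Finset.mem_image_of_mem _ (Finset.mem_univ j))
    have hr' : algebraMap ℤ_[p] ℚ_[p] r = b • B.basis.repr x j := hr
    rw [← smul_assoc, ← hr', algebraMap_smul, B.basis_eq_pow, hBgen]
    exact Subalgebra.smul_mem _ (pow_mem (Algebra.self_mem_adjoin_singleton _ _) _) _
  obtain ⟨u, n, hbp⟩ : ∃ (u : ℤ_[p]ˣ) (n : ℕ), b = u * (p : ℤ_[p]) ^ n :=
    ⟨_, _, PadicInt.unitCoeff_spec hb0⟩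
  rw [← hBgen]
  refine mem_adjoin_of_smul_prime_pow_smul_of_minpoly_isEisensteinAt (p := (p : ℤ_[p]))
    (n := n) (B := B) PadicInt.prime_p (hBgen ▸ hint) hx ?_ ?_
  · rw [hBgen]
    have := Subalgebra.smul_mem _ hbmem ((u⁻¹ : ℤ_[p]ˣ) : ℤ_[p])
    rwa [smul_smul, hbp, ← mul_assoc, Units.inv_mul, one_mul] at this
  · rw [hBgen, hmin]
    exact cyclotomic_padicInt_comp_isEisensteinAt

lemma exists_eq_algebraMap_add_mul [IsCyclotomicExtension {p} ℚ_[p] L]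
    (hζ : IsPrimitiveRoot ζ p) {x : L} (hx : IsIntegral ℤ_[p] x) :
    ∃ (a : ℤ_[p]) (y : L), IsIntegral ℤ_[p] y ∧ x = algebraMap ℤ_[p] L a + (ζ - 1) * y := by
  have hint : IsIntegral ℤ_[p] (ζ - 1) :=
    (hζ.isIntegral (Fact.out : p.Prime).pos).tower_top.sub isIntegral_one
  have hx' := mem_adjoin_of_isIntegral hζ hx
  clear hx
  induction hx' using Algebra.adjoin_induction with
  | mem x hx => exact ⟨0, 1, isIntegral_one, by rw [Set.mem_singleton_iff.1 hx]; simp⟩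
  | algebraMap a => exact ⟨a, 0, isIntegral_zero, by simp⟩
  | add x x' _ _ h h' =>
    obtain ⟨a, y, hy, rfl⟩ := h
    obtain ⟨a', y', hy', rfl⟩ := h'
    exact ⟨a + a', y + y', hy.add hy', by rw [map_add]; ring⟩
  | mul x x' _ _ h h' =>
    obtain ⟨a, y, hy, rfl⟩ := h
    obtain ⟨a', y', hy', rfl⟩ := h'
    refine ⟨a * a', algebraMap _ _ a * y' + y * algebraMap _ _ a' + (ζ - 1) * y * y', ?_, ?_⟩
    · exact ((isIntegral_algebraMap.mul hy').add (hy.mul isIntegral_algebraMap)).add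
        ((hint.mul hy).mul hy')
    · rw [map_mul]
      ring

end Integers

section Frame

variable {p : ℕ} [Fact p.Prime] {L : Type*} [Field L] [Algebra ℚ_[p] L] [Algebra ℤ_[p] L]
  [IsScalarTower ℤ_[p] ℚ_[p] L]

/-- The Galois action `σ`, the character `ψ : a ↦ ζ ^ a` and the absolute value `N`, with
`N (ζ - 1) = ρ`, of the `p`-th cyclotomic extension of `ℚ_p`. -/
structure IsCyclotomicFrame (ζ : L) (σ : ZMod p → L →+* L) (ψ : AddChar (ZMod p) L)
    (N : AbsoluteValue L ℝ) (ρ : ℝ) : Prop where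
  primitive : IsPrimitiveRoot ζ p
  apply_one : ψ 1 = ζ
  sum_apply : ∀ b, ∑ a, ψ (a * b) = if b = 0 then (p : L) else 0
  galois_algebraMap : ∀ a (r : ℤ_[p]), σ a (algebraMap ℤ_[p] L r) = algebraMap ℤ_[p] L r
  galois_one : ∀ x, σ 1 x = x
  galois_mul : ∀ a b, a ≠ 0 → b ≠ 0 → ∀ x, σ a (σ b x) = σ (a * b) x
  galois_apply : ∀ a, a ≠ 0 → ∀ b, σ a (ψ b) = ψ (a * b)
  nonarch : IsNonarchimedean N
  norm_galois : ∀ a x, N (σ a x) = N x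
  norm_le_one_iff : ∀ x, N x ≤ 1 ↔ IsIntegral ℤ_[p] x
  norm_apply : ∀ a, N (ψ a) = 1
  norm_sub_one : N (ζ - 1) = ρ
  norm_sub : ∀ a b, a ≠ b → N (ψ a - ψ b) = ρ
  pos : 0 < ρ
  lt_one : ρ < 1
  exists_eq_add : ∀ x : L, IsIntegral ℤ_[p] x →
    ∃ (a : ℤ_[p]) (y : L), IsIntegral ℤ_[p] y ∧ x = algebraMap ℤ_[p] L a + (ζ - 1) * y
  mem_span : ∀ x : L, IsIntegral ℤ_[p] x → x ∈ Submodule.span ℤ_[p] (Set.range ψ)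

lemma exists_isCyclotomicFrame {ζ : L} (hζ : IsPrimitiveRoot ζ p)
    (hgen : Algebra.adjoin ℚ_[p] {ζ} = ⊤) :
    ∃ σ ψ N ρ, IsCyclotomicFrame (p := p) ζ σ ψ N ρ := by
  have hpr : p.Prime := Fact.out
  have : NeZero p := ⟨hpr.ne_zero⟩
  have := isCyclotomicExtension_of_adjoin_eq_top hζ hgen
  have : FiniteDimensional ℚ_[p] L := IsCyclotomicExtension.finiteDimensional {p} ℚ_[p] L
  obtain ⟨σ, hσζ, hσ1, hσ⟩ := exists_galois_action hζ
  obtain ⟨N, hN, hNσ, hNint, hNext⟩ := exists_absoluteValue (p := p) (L := L)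
  let ψ : AddChar (ZMod p) L := AddChar.zmodChar p hζ.pow_eq_one
  have hψ : ∀ a, ψ a = ζ ^ a.val := AddChar.zmodChar_apply hζ.pow_eq_one
  have hψ1 : ψ 1 = ζ := by
    rw [hψ, ZMod.val_one, pow_one]
  have hpow : ∀ n : ℕ, ψ n = ζ ^ n := fun n => by
    rw [← hψ1, ← AddChar.map_nsmul_eq_pow, nsmul_eq_mul, mul_one]
  have hσψ : ∀ a, a ≠ 0 → ∀ b, σ a (ψ b) = ψ (a * b) := by
    intro a ha b
    rw [hψ b, map_pow, hσζ a ha, ← hψ a, ← AddChar.map_nsmul_eq_pow, nsmul_eq_mul,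
      ZMod.natCast_zmod_val, mul_comm]
  have hNψ : ∀ a, N (ψ a) = 1 := by
    intro a
    have h : N (ψ a) ^ p = 1 := by
      rw [← map_pow, ← AddChar.map_nsmul_eq_pow]
      simp
    exact (pow_eq_one_iff_of_nonneg (N.nonneg _) hpr.ne_zero).1 h
  have hsub : ∀ a b, a ≠ b → N (ψ a - ψ b) = N (ζ - 1) := by
    intro a b hab
    have hab' : a - b ≠ 0 := sub_ne_zero.2 hab
    have h : ψ a - ψ b = ψ b * σ (a - b) (ζ - 1) := by
      rw [map_sub, map_one, ← hψ1, hσψ _ hab', mul_one, mul_sub, ← AddChar.map_add_eq_mul,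
        mul_one, add_sub_cancel]
    rw [h, map_mul, hNψ, one_mul, hNσ]
  have hp0 : (p : ℚ_[p]) ≠ 0 := Nat.cast_ne_zero.2 hpr.ne_zero
  refine ⟨fun a => (σ a : L →+* L), ψ, N, N (ζ - 1), hζ, hψ1, fun b => ?_, fun a r => ?_, hσ1, hσ,
    hσψ, hN, fun a x => hNσ (σ a) x, hNint, hNψ, rfl, hsub, ?_, ?_,
    fun x hx => exists_eq_algebraMap_add_mul hζ hx, fun x hx => ?_⟩
  · rw [AddChar.sum_mulShift b (AddChar.zmodChar_primitive_of_primitive_root p hζ), ZMod.card]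
    split_ifs <;> simp
  · rw [IsScalarTower.algebraMap_apply ℤ_[p] ℚ_[p] L]
    exact (σ a).commutes _
  · exact N.pos (sub_ne_zero.2 (hζ.ne_one hpr.one_lt))
  · by_contra! h
    obtain ⟨n, hn⟩ : ∃ n, p = n + 1 := ⟨p - 1, by have := hpr.pos; omega⟩
    have hprod : ∏ k ∈ Finset.range n, (1 - ζ ^ (k + 1)) = (p : L) := by
      have := IsPrimitiveRoot.prod_one_sub_pow_eq_order (n := n) (hn ▸ hζ)
      rw [this, hn]
      simp
    have h1 : N (p : L) = ‖(p : ℚ_[p])‖ := by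
      rw [← hNext]
      simp
    have h2 : 1 ≤ N (p : L) := by
      rw [← hprod, map_prod, ← Finset.prod_const_one (s := Finset.range n)]
      refine Finset.prod_le_prod (fun _ _ => zero_le_one) fun k hk => ?_
      rw [← hpow, ← AddChar.map_zero_eq_one ψ, hsub]
      · exact h
      · intro h0
        have := Nat.le_of_dvd (Nat.succ_pos k) ((ZMod.natCast_eq_zero_iff _ _).1 h0.symm)
        have := Finset.mem_range.1 hk
        omega
    rw [h1] at h2
    exact absurd (Padic.norm_p_lt_one (p := p)) (not_lt.2 h2)
  · have h1 : Algebra.adjoin ℤ_[p] {ζ - 1} ≤ Algebra.adjoin ℤ_[p] {ζ} :=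
      Algebra.adjoin_le (Set.singleton_subset_iff.2
        (sub_mem (Algebra.self_mem_adjoin_singleton _ _) (one_mem _)))
    have h2 : x ∈ Subalgebra.toSubmodule (Algebra.adjoin ℤ_[p] {ζ}) :=
      h1 (mem_adjoin_of_isIntegral hζ hx)
    rw [Algebra.adjoin_eq_span] at h2
    refine Submodule.span_mono ?_ h2
    intro y hy
    obtain ⟨n, rfl⟩ := Submonoid.mem_closure_singleton.1 hy
    exact ⟨n, hpow n⟩

end Frame

section Equivariant

variable {p : ℕ} [Fact p.Prime] {K : Type} [Field K] [Algebra ℤ_[p] K]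
  {θ : 𝒪 p K} {γ : 𝒪 p K →ₗ[ℤ_[p]] 𝒪 p K →ₗ[ℤ_[p]] 𝒪 p K}
  {σ : ZMod p → K →+* K} {ψ : AddChar (ZMod p) K} {N : AbsoluteValue K ℝ} {ρ : ℝ}

lemma IsPEquivariant.neg (hγ : IsPEquivariant p K θ γ) (x y : 𝒪 p K) : γ x y = -γ y x := by
  have h : γ.IsAlt := hγ.1
  exact (h.neg y x).symm

lemma IsPEquivariant.pow_mul (hγ : IsPEquivariant p K θ γ) (n : ℕ) (x y : 𝒪 p K) :
    γ (θ ^ n * x) (θ ^ n * y) = θ ^ n * γ x y := by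
  induction n with
  | zero => simp
  | succ n ih => rw [pow_succ', mul_assoc, mul_assoc, hγ.2, ih, mul_assoc]

lemma mem_pid_pow_iff (hF : IsCyclotomicFrame (p := p) (θ : K) σ ψ N ρ) (k : ℕ) (x : 𝒪 p K) :
    x ∈ pid p K θ ^ k ↔ N x ≤ ρ ^ k := by
  have hκ : N ((θ - 1 : 𝒪 p K) : K) = ρ := hF.norm_sub_one
  have hκ0 : ((θ - 1 : 𝒪 p K) : K) ≠ 0 := fun h => hF.pos.ne' (by rw [← hκ, h, map_zero])
  rw [pid, Ideal.span_singleton_pow, Ideal.mem_span_singleton]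
  constructor
  · rintro ⟨y, rfl⟩
    rw [MulMemClass.coe_mul, SubmonoidClass.coe_pow, map_mul, map_pow, hκ]
    exact mul_le_of_le_one_right (pow_nonneg hF.pos.le k) ((hF.norm_le_one_iff _).2 y.2)
  · intro h
    refine ⟨⟨((θ - 1 : 𝒪 p K) : K)⁻¹ ^ k * x, (hF.norm_le_one_iff _).1 ?_⟩, Subtype.ext ?_⟩
    · rw [map_mul, map_pow, map_inv₀, hκ, inv_pow]
      rwa [inv_mul_le_iff₀ (pow_pos hF.pos k), mul_one]
    · rw [MulMemClass.coe_mul, SubmonoidClass.coe_pow, ← mul_assoc, ← mul_pow,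
        mul_inv_cancel₀ hκ0, one_pow, one_mul]

variable [Algebra ℚ_[p] K]

/-- Every equivariant bilinear map is a combination of the standard ones
`(x, y) ↦ σ t x * σ (1 - t) y`. -/
lemma IsPEquivariant.exists_eq_sum (hF : IsCyclotomicFrame (p := p) (θ : K) σ ψ N ρ)
    (hγ : IsPEquivariant p K θ γ) :
    ∃ c : ZMod p → K, c 0 = 0 ∧ (∀ t, c (1 - t) = -c t) ∧
      ∀ x y : 𝒪 p K, (γ x y : K) = ∑ t, c t * σ t x * σ (1 - t) y := by
  have hpr : p.Prime := Fact.out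
  have : NeZero p := ⟨hpr.ne_zero⟩
  have : CharZero K := charZero_of_injective_algebraMap (algebraMap ℚ_[p] K).injective
  have hp0 : (p : K) ≠ 0 := Nat.cast_ne_zero.2 hpr.ne_zero
  let e : ZMod p → 𝒪 p K := fun j => θ ^ j.val
  have he : ∀ j, (e j : K) = ψ j := fun j => by
    change ((θ ^ j.val : 𝒪 p K) : K) = _
    rw [SubmonoidClass.coe_pow, ← hF.apply_one, ← AddChar.map_nsmul_eq_pow, nsmul_eq_mul, mul_one,
      ZMod.natCast_zmod_val]
  have heγ : ∀ j x y, γ (e j * x) (e j * y) = e j * γ x y := fun j => hγ.pow_mul _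
  have he_add : ∀ j k, e (j + k) = e j * e k := fun j k => Subtype.ext (by
    push_cast
    rw [he, he, he, AddChar.map_add_eq_mul])
  have he_zero : e 0 = 1 := by simp [e]
  let G : ZMod p → K := fun j => (γ (e j) 1 : 𝒪 p K)
  have hG_neg : ∀ j, G (-j) = -(ψ (-j) * G j) := by
    intro j
    have h := heγ (-j) (e j) 1
    rw [← he_add, neg_add_cancel, he_zero, mul_one, hγ.neg] at h
    have h' := congrArg (fun x : 𝒪 p K => (x : K)) h
    simp only [NegMemClass.coe_neg, MulMemClass.coe_mul, he] at h'
    rw [← h', neg_neg]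
  have hγG : ∀ j k, (γ (e j) (e k) : K) = ψ k * G (j - k) := by
    intro j k
    have h := heγ k (e (j - k)) 1
    rw [← he_add, add_sub_cancel, mul_one] at h
    rw [h, MulMemClass.coe_mul, he]
  let c : ZMod p → K := fun t => (p : K)⁻¹ * ∑ j, G j * ψ (-(j * t))
  have hsum : ∑ j, e j = 0 := Subtype.ext (by
    push_cast
    rw [Finset.sum_congr rfl fun j _ => he j]
    simpa using hF.sum_apply 1)
  have hc0 : c 0 = 0 := by
    have h : ∑ j, G j = 0 := by
      have h1 : ∑ j, γ (e j) 1 = 0 := by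
        rw [← LinearMap.sum_apply, ← map_sum, hsum, map_zero, LinearMap.zero_apply]
      have h2 := congrArg (fun x : 𝒪 p K => (x : K)) h1
      simpa [G] using h2
    simp [c, h]
  have hc : ∀ t, c (1 - t) = -c t := by
    intro t
    simp only [c]
    rw [← mul_neg, ← Finset.sum_neg_distrib, ← Equiv.sum_comp (Equiv.neg (ZMod p))]
    congr 1
    refine Finset.sum_congr rfl fun j _ => ?_
    rw [Equiv.neg_apply, hG_neg, show -(-j * (1 - t)) = j + -(j * t) by ring,
      AddChar.map_add_eq_mul]
    have h : ψ (-j) * ψ j = 1 := by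
      rw [← AddChar.map_add_eq_mul, neg_add_cancel, AddChar.map_zero_eq_one]
    linear_combination (-(G j * ψ (-(j * t)))) * h
  have hinv : ∀ m, ∑ t, c t * ψ (t * m) = G m := by
    intro m
    simp only [c, mul_assoc, Finset.sum_mul, ← Finset.mul_sum]
    rw [Finset.sum_comm]
    have h : ∀ j, ∑ t, G j * (ψ (-(j * t)) * ψ (t * m)) = if j = m then G j * p else 0 := by
      intro j
      rw [← Finset.mul_sum, Finset.sum_congr rfl fun t _ =>
        (show ψ (-(j * t)) * ψ (t * m) = ψ (t * (m - j)) by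
          rw [← AddChar.map_add_eq_mul]
          congr 1
          ring), hF.sum_apply]
      by_cases hj : j = m
      · simp [hj]
      · simp [hj, sub_ne_zero.2 (Ne.symm hj)]
    rw [Finset.sum_congr rfl fun j _ => h j]
    simp only [Finset.sum_ite_eq', Finset.mem_univ, if_true]
    field_simp
  have hc1 : c 1 = 0 := by
    have := hc 0
    rwa [sub_zero, hc0, neg_zero] at this
  refine ⟨c, hc0, hc, fun x y => ?_⟩
  have hbasis : ∀ j k, (γ (e j) (e k) : K) = ∑ t, c t * σ t (e j) * σ (1 - t) (e k) := by
    intro j k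
    rw [hγG, ← hinv, Finset.mul_sum]
    refine Finset.sum_congr rfl fun t _ => ?_
    by_cases ht0 : t = 0
    · simp [ht0, hc0]
    by_cases ht1 : t = 1
    · simp [ht1, hc1]
    have h : ψ k * ψ (t * (j - k)) = ψ (t * j) * ψ ((1 - t) * k) := by
      rw [← AddChar.map_add_eq_mul, ← AddChar.map_add_eq_mul]
      congr 1
      ring
    rw [he, he, hF.galois_apply t ht0, hF.galois_apply _ (sub_ne_zero.2 (Ne.symm ht1))]
    linear_combination c t * h
  have hspan : ∀ x : 𝒪 p K, x ∈ Submodule.span ℤ_[p] (Set.range e) := by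
    intro x
    have h := hF.mem_span x x.2
    have hr : Set.range ψ = (𝒪 p K).val.toLinearMap '' Set.range e := by
      rw [← Set.range_comp]
      congr 1
      ext j
      exact (he j).symm
    rw [hr, Submodule.span_image] at h
    obtain ⟨x', hx', hxx⟩ := h
    rwa [← Subtype.ext (hxx : (x' : K) = x)]
  have hsmul : ∀ (r : ℤ_[p]) (x : 𝒪 p K), ((r • x : 𝒪 p K) : K) = algebraMap ℤ_[p] K r * x :=
    fun r x => Algebra.smul_def r (x : K)
  induction hspan x, hspan y using Submodule.span_induction₂ with
  | mem_mem x y hx hy =>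
    obtain ⟨j, rfl⟩ := hx
    obtain ⟨k, rfl⟩ := hy
    exact hbasis j k
  | zero_left y => simp
  | zero_right x => simp
  | add_left x y z _ _ _ h h' =>
    simp only [map_add, LinearMap.add_apply, AddMemClass.coe_add, h, h',
      ← Finset.sum_add_distrib]
    refine Finset.sum_congr rfl fun t _ => ?_
    ring
  | add_right x y z _ _ _ h h' =>
    simp only [map_add, AddMemClass.coe_add, h, h', ← Finset.sum_add_distrib]
    refine Finset.sum_congr rfl fun t _ => ?_
    ring
  | smul_left r x y _ _ h =>
    rw [map_smul, LinearMap.smul_apply, hsmul, h, Finset.mul_sum]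
    refine Finset.sum_congr rfl fun t _ => ?_
    rw [hsmul, map_mul, hF.galois_algebraMap]
    ring
  | smul_right r x y _ _ h =>
    rw [map_smul, hsmul, h, Finset.mul_sum]
    refine Finset.sum_congr rfl fun t _ => ?_
    rw [hsmul, map_mul, hF.galois_algebraMap]
    ring

end Equivariant

section Bounds

variable {p : ℕ} [Fact p.Prime] {K : Type} [Field K] [Algebra ℤ_[p] K]
  {θ : 𝒪 p K} {γ : 𝒪 p K →ₗ[ℤ_[p]] 𝒪 p K →ₗ[ℤ_[p]] 𝒪 p K}
  {σ : ZMod p → K →+* K} {ψ : AddChar (ZMod p) K} {N : AbsoluteValue K ℝ} {ρ : ℝ}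
  {c : ZMod p → K} {M : ℝ} {i : ℕ}

/-- The ideals `J_i(γ)` and `W_3(i)` only involve double brackets. -/
lemma Jid_le_Wid : Jid p K θ γ i ≤ Wid p K θ γ i 3 := by
  have h : ∀ x ∈ pid p K θ ^ i, ∀ y ∈ pid p K θ ^ i, ∀ z ∈ pid p K θ ^ i,
      γ (γ x y) z ∈ Wid p K θ γ i 3 := fun x hx y hy z hz =>
    Ideal.subset_span ⟨γ x y, Ideal.subset_span ⟨x, hx, y, hy, rfl⟩, z, hz, rfl⟩
  refine Ideal.span_le.2 ?_
  rintro _ ⟨x, hx, y, hy, z, hz, rfl⟩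
  exact add_mem (add_mem (h x hx y hy z hz) (h y hy z hz x hx)) (h z hz x hx y hy)

lemma norm_bracket_le (hF : IsCyclotomicFrame (p := p) (θ : K) σ ψ N ρ) (hM : 0 ≤ M)
    (hcM : ∀ t, N (c t) ≤ M)
    (hc : ∀ x y : 𝒪 p K, (γ x y : K) = ∑ t, c t * σ t x * σ (1 - t) y) (x y : 𝒪 p K) :
    N (γ x y) ≤ M * N x * N y := by
  rw [hc]
  refine Finset.sum_induction _ (fun v => N v ≤ M * N x * N y)
    (fun u v hu hv => (hF.nonarch u v).trans (max_le hu hv)) ?_ fun t _ => ?_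
  · rw [map_zero]
    positivity
  · rw [map_mul, map_mul, hF.norm_galois, hF.norm_galois]
    gcongr
    exact hcM t

/-- As `γ` is alternating and `𝔭` has residue field `𝔽_p`, brackets of elements of `𝔭^i` are
smaller than the trivial estimate. -/
lemma norm_bracket_le_of_mem (hF : IsCyclotomicFrame (p := p) (θ : K) σ ψ N ρ)
    (hγ : IsPEquivariant p K θ γ) (hM : 0 ≤ M)
    (hbd : ∀ x y : 𝒪 p K, N (γ x y) ≤ M * N x * N y) {x y : 𝒪 p K}
    (hx : x ∈ pid p K θ ^ i) (hy : y ∈ pid p K θ ^ i) :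
    N (γ x y) ≤ M * ρ ^ (2 * i + 1) := by
  have hρ := hF.pos.le
  have hdec : ∀ x ∈ pid p K θ ^ i, ∃ (a : ℤ_[p]) (x' : 𝒪 p K),
      x' ∈ pid p K θ ^ (i + 1) ∧ x = a • (θ - 1) ^ i + x' := by
    intro x hx
    rw [pid, Ideal.span_singleton_pow, Ideal.mem_span_singleton] at hx
    obtain ⟨u, rfl⟩ := hx
    obtain ⟨a, y, hy, hu⟩ := hF.exists_eq_add u u.2
    refine ⟨a, (θ - 1) ^ (i + 1) * ⟨y, hy⟩, ?_, ?_⟩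
    · rw [pid, Ideal.span_singleton_pow]
      exact Ideal.mul_mem_right _ _ (Ideal.mem_span_singleton_self _)
    · have hu' : u = algebraMap ℤ_[p] (𝒪 p K) a + (θ - 1) * ⟨y, hy⟩ := Subtype.ext hu
      rw [hu', Algebra.smul_def]
      ring
  have hbound : ∀ (m n : ℕ) (x y : 𝒪 p K), m + n = 2 * i + 1 → x ∈ pid p K θ ^ m →
      y ∈ pid p K θ ^ n → N (γ x y) ≤ M * ρ ^ (2 * i + 1) := by
    intro m n x y hmn hx hy
    rw [mem_pid_pow_iff hF] at hx hy
    refine (hbd x y).trans ?_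
    rw [← hmn, pow_add, mul_assoc]
    gcongr
  obtain ⟨a, x', hx', rfl⟩ := hdec x hx
  obtain ⟨b, y', hy', rfl⟩ := hdec y hy
  have hκ : a • (θ - 1) ^ i ∈ pid p K θ ^ i :=
    Submodule.smul_of_tower_mem _ a (Ideal.pow_mem_pow (Ideal.mem_span_singleton_self _) i)
  have h : γ (a • (θ - 1) ^ i + x') (b • (θ - 1) ^ i + y') =
      γ (a • (θ - 1) ^ i) y' + γ x' (b • (θ - 1) ^ i + y') := by
    have h0 : γ (a • (θ - 1) ^ i) (b • (θ - 1) ^ i) = 0 := by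
      rw [map_smul, map_smul, LinearMap.smul_apply, hγ.1, smul_zero, smul_zero]
    rw [map_add γ, LinearMap.add_apply, map_add (γ (a • (θ - 1) ^ i)), h0, zero_add]
  rw [h]
  exact (hF.nonarch _ _).trans (max_le (hbound i (i + 1) _ _ (by ring) hκ hy')
    (hbound (i + 1) i _ _ (by ring) hx' hy))

lemma one_le_of_inHhat (hF : IsCyclotomicFrame (p := p) (θ : K) σ ψ N ρ)
    (hγ : IsPEquivariant p K θ γ) (hγi : InHhat p K θ i γ) (hM : 0 ≤ M)
    (hbd : ∀ x y : 𝒪 p K, N (γ x y) ≤ M * N x * N y) : 1 ≤ M := by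
  have hρ := hF.pos
  have hmem : (θ - 1) ^ (2 * i + 1) ∈ (pid p K θ ^ (2 * i + 1)).restrictScalars ℤ :=
    Ideal.pow_mem_pow (Ideal.mem_span_singleton_self _) _
  rw [← hγi] at hmem
  have h : ∀ v ∈ Submodule.span ℤ (Set.image2 (fun x y => γ x y)
      ((pid p K θ ^ i : Ideal (𝒪 p K)) : Set (𝒪 p K))
      ((pid p K θ ^ i : Ideal (𝒪 p K)) : Set (𝒪 p K))), N v ≤ M * ρ ^ (2 * i + 1) := by
    intro v hv
    induction hv using Submodule.span_induction with
    | mem v hv =>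
      obtain ⟨x, hx, y, hy, rfl⟩ := hv
      exact norm_bracket_le_of_mem hF hγ hM hbd hx hy
    | zero =>
      rw [ZeroMemClass.coe_zero, map_zero]
      positivity
    | add u v _ _ hu hv => exact (hF.nonarch u v).trans (max_le hu hv)
    | smul n v _ hv =>
      have hn : N ((n : 𝒪 p K) : K) ≤ 1 := (hF.norm_le_one_iff _).2 (n : 𝒪 p K).2
      rw [zsmul_eq_mul, MulMemClass.coe_mul, map_mul]
      exact (mul_le_of_le_one_left (N.nonneg _) hn).trans hv
  have h1 := h _ hmem
  rw [SubmonoidClass.coe_pow, map_pow, show N ((θ - 1 : 𝒪 p K) : K) = ρ from hF.norm_sub_one]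
    at h1
  exact le_of_mul_le_mul_right (by rwa [one_mul]) (pow_pos hρ _)

lemma norm_le_of_mem_Wid (hF : IsCyclotomicFrame (p := p) (θ : K) σ ψ N ρ)
    (hγi : InHhat p K θ i γ) (hM : 0 ≤ M)
    (hbd : ∀ x y : 𝒪 p K, N (γ x y) ≤ M * N x * N y) {v : 𝒪 p K}
    (hv : v ∈ Wid p K θ γ i 3) : N v ≤ M * ρ ^ (3 * i + 1) := by
  have hρ := hF.pos.le
  have hW2 : Wid p K θ γ i 2 ≤ pid p K θ ^ (2 * i + 1) := by
    refine Ideal.span_le.2 ?_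
    rintro _ ⟨x, hx, y, hy, rfl⟩
    have h : γ x y ∈ (pid p K θ ^ (2 * i + 1)).restrictScalars ℤ := by
      rw [← hγi]
      exact Submodule.subset_span ⟨x, hx, y, hy, rfl⟩
    exact h
  change v ∈ Ideal.span _ at hv
  induction hv using Submodule.span_induction with
  | mem v hv =>
    obtain ⟨x, hx, y, hy, rfl⟩ := hv
    have hx' := (mem_pid_pow_iff hF _ _).1 (hW2 hx)
    have hy' := (mem_pid_pow_iff hF _ _).1 hy
    refine (hbd x y).trans ?_
    rw [show 3 * i + 1 = (2 * i + 1) + i by ring, pow_add, mul_assoc]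
    gcongr
  | zero =>
    rw [ZeroMemClass.coe_zero, map_zero]
    positivity
  | add u v _ _ hu hv => exact (hF.nonarch u v).trans (max_le hu hv)
  | smul n v _ hv =>
    have hn : N (n : K) ≤ 1 := (hF.norm_le_one_iff _).2 n.2
    rw [smul_eq_mul, MulMemClass.coe_mul, map_mul]
    exact (mul_le_of_le_one_left (N.nonneg _) hn).trans hv

lemma sq_mul_pow_le_of_Jid_eq [CharZero K] (hp : 5 ≤ p)
    (hF : IsCyclotomicFrame (p := p) (θ : K) σ ψ N ρ)
    (hc0 : c 0 = 0) (hc1 : ∀ t, c (1 - t) = -c t)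
    (hc : ∀ x y : 𝒪 p K, (γ x y : K) = ∑ t, c t * σ t x * σ (1 - t) y) (hM : 0 < M)
    (hcM : ∀ t, N (c t) ≤ M) (hex : ∃ t, N (c t) = M) {l : ℕ}
    (hl : Jid p K θ γ i = pid p K θ ^ l) :
    M ^ 2 * ρ ^ (2 * p - 7) * ρ ^ (3 * i) ≤ ρ ^ l := by
  have hρ := hF.pos
  obtain ⟨a, b, d, habd, hMabd⟩ := exists_le_jacCoeff N hF.nonarch hF.norm_galois hF.galois_mul
    hc0 hc1 hM hcM hex
  obtain ⟨a₁, b₁, d₁, hrot, A, D, ha, hb, hcard, hAD⟩ := exists_separating hp habd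
  have h₁ : IsJacobiTriple a₁ b₁ d₁ ∧ M ^ 2 ≤ N (jacCoeff (structConst σ c) a₁ b₁ d₁) := by
    rcases hrot with h | h | h <;> simp only [Prod.mk.injEq] at h <;> obtain ⟨rfl, rfl, rfl⟩ := h
    · exact ⟨habd, hMabd⟩
    · exact ⟨habd.rotate, by rwa [jacCoeff_rotate]⟩
    · exact ⟨habd.rotate.rotate, by rwa [jacCoeff_rotate, jacCoeff_rotate]⟩
  let S : Set K := (fun x : 𝒪 p K => (x : K)) '' (pid p K θ ^ i : Ideal (𝒪 p K))
  have hS : ∀ x ∈ S, ψ 1 * x ∈ S := by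
    rintro _ ⟨x, hx, rfl⟩
    refine ⟨θ * x, Ideal.mul_mem_left _ _ hx, ?_⟩
    rw [hF.apply_one]
    rfl
  have hz : ((θ - 1 : 𝒪 p K) : K) ^ i ∈ S :=
    ⟨(θ - 1) ^ i, Ideal.pow_mem_pow (Ideal.mem_span_singleton_self _) _, rfl⟩
  let Γ : K → K → K := fun x y => ∑ t, c t * σ t x * σ (1 - t) y
  have hΓγ : ∀ x y : 𝒪 p K, Γ x y = γ x y := fun x y => (hc x y).symm
  have hB : ∀ x ∈ S, ∀ y ∈ S, ∀ z ∈ S, N (∑ a, ∑ b, jacCoeff (structConst σ c) a b (1 - a - b) *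
      (σ a x * σ b y * σ (1 - a - b) z)) ≤ ρ ^ l := by
    rintro _ ⟨x, hx, rfl⟩ _ ⟨y, hy, rfl⟩ _ ⟨z, hz, rfl⟩
    have hJ : γ (γ x y) z + γ (γ y z) x + γ (γ z x) y ∈ pid p K θ ^ l :=
      hl ▸ Ideal.subset_span ⟨x, hx, y, hy, z, hz, rfl⟩
    rw [← jacobi_eq_sum hF.galois_mul hF.galois_one hc0 hc1 (Γ := Γ) (fun _ _ => rfl)]
    simp only [hΓγ]
    exact (mem_pid_pow_iff hF l _).1 hJ
  have hmain := norm_coeff_le N hF.nonarch hF.norm_galois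
    (fun a ha => by rw [hF.galois_apply a ha, mul_one]) hF.norm_apply hF.norm_sub hS hz
    (fun a b d hsum h => isJacobiTriple_of_jacCoeff_ne_zero hc0 hc1 hsum h) hB h₁.1 A D ha hb hAD
  rw [map_pow, show N ((θ - 1 : 𝒪 p K) : K) = ρ from hF.norm_sub_one, ← pow_mul, mul_comm i 3]
    at hmain
  refine le_trans ?_ hmain
  gcongr ?_ * ?_ * _
  · exact h₁.2
  · exact pow_le_pow_of_le_one hρ.le hF.lt_one.le (by omega)

end Bounds

/-- For `γ ∈ Ĥ_i` with `J_i(γ) ≠ 0`, writing `W_3(i) = 𝔭^w` and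
`J_i(γ) = 𝔭^λ`, one has `w ≤ λ ≤ w + 2p − 8`; in particular
`𝔭^{w+2p−8} ⊆ J_i(γ) ⊆ W_3(i)`. -/
theorem frame_J_between_W3 (hp : 5 ≤ p) (hθ : IsPrimitiveRoot (θ : K) p)
    (hgen : Algebra.adjoin ℚ_[p] {(θ : K)} = ⊤)
    (hγ : IsPEquivariant p K θ γ)
    (i : ℕ) (hγi : InHhat p K θ i γ) (hJ : Jid p K θ γ i ≠ ⊥)
    (w l : ℕ) (hw : Wid p K θ γ i 3 = pid p K θ ^ w)
    (hl : Jid p K θ γ i = pid p K θ ^ l) :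
    w ≤ l ∧ l ≤ w + 2 * p - 8 ∧
      pid p K θ ^ (w + 2 * p - 8) ≤ Jid p K θ γ i ∧
      Jid p K θ γ i ≤ Wid p K θ γ i 3 := by
  have : CharZero K := charZero_of_injective_algebraMap (algebraMap ℚ_[p] K).injective
  obtain ⟨σ, ψ, N, ρ, hF⟩ := exists_isCyclotomicFrame (p := p) hθ hgen
  obtain ⟨c, hc0, hc1, hc⟩ := hγ.exists_eq_sum hF
  obtain ⟨t₀, -, ht₀⟩ := Finset.exists_max_image Finset.univ (fun t => N (c t))
    ⟨0, Finset.mem_univ _⟩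
  have hcM : ∀ t, N (c t) ≤ N (c t₀) := fun t => ht₀ t (Finset.mem_univ t)
  have hM0 : 0 ≤ N (c t₀) := N.nonneg _
  have hbd := norm_bracket_le hF hM0 hcM hc
  have hM1 : 1 ≤ N (c t₀) := one_le_of_inHhat hF hγ hγi hM0 hbd
  have hρ := hF.pos
  have hpow_mem : ∀ k, N (((θ - 1) ^ k : 𝒪 p K) : K) = ρ ^ k := fun k => by
    rw [SubmonoidClass.coe_pow, map_pow]
    exact congrArg (· ^ k) hF.norm_sub_one
  have hκ : ∀ k, (θ - 1) ^ k ∈ pid p K θ ^ k := fun k =>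
    Ideal.pow_mem_pow (Ideal.mem_span_singleton_self _) k
  have hle : Jid p K θ γ i ≤ Wid p K θ γ i 3 := Jid_le_Wid
  have hwl : w ≤ l := by
    have h : (θ - 1) ^ l ∈ pid p K θ ^ w := hw ▸ hle (hl ▸ hκ l)
    rw [mem_pid_pow_iff hF, hpow_mem] at h
    exact (pow_le_pow_iff_right_of_lt_one₀ hρ hF.lt_one).1 h
  have hlw : l ≤ w + 2 * p - 8 := by
    have hW := norm_le_of_mem_Wid hF hγi hM0 hbd (hw ▸ hκ w)
    rw [hpow_mem] at hW
    have hJl := sq_mul_pow_le_of_Jid_eq hp hF hc0 hc1 hc (zero_lt_one.trans_le hM1) hcM ⟨t₀, rfl⟩ hl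
    refine (pow_le_pow_iff_right_of_lt_one₀ hρ hF.lt_one).1 ?_
    calc ρ ^ (w + 2 * p - 8) = ρ ^ w * ρ ^ (2 * p - 8) := by
          rw [← pow_add]
          congr 1
          omega
      _ ≤ N (c t₀) * ρ ^ (3 * i + 1) * ρ ^ (2 * p - 8) := by gcongr
      _ = N (c t₀) * (ρ ^ (2 * p - 7) * ρ ^ (3 * i)) := by
          rw [mul_assoc, ← pow_add, ← pow_add]
          congr 2
          omega
      _ ≤ N (c t₀) ^ 2 * (ρ ^ (2 * p - 7) * ρ ^ (3 * i)) := by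
          gcongr
          exact le_self_pow₀ hM1 two_ne_zero
      _ ≤ ρ ^ l := by rwa [← mul_assoc]
  exact ⟨hwl, hlw, hl ▸ Ideal.pow_le_pow_right hlw, hle⟩

end MaximalClassFrame
end

section
/- Let i > p−2 and let γ ∈ Ĥ_i with J_i(γ) ≠ {0}. Then the Lie ring L_i(γ) = 𝔭^i/J_i(γ) is nilpotent of class c, where c satisfies (c − 3)·(i − (p−2)) ≤ 2p − 8; equivalently c ≤ 3 + (2p−8)/(i−(p−2)). -/
set_option synthInstance.maxHeartbeats 1000000
set_option maxHeartbeats 1000000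

namespace MaximalClassFrame

variable (p : ℕ) [Fact p.Prime]
variable (K : Type) [Field K] [Algebra ℚ_[p] K] [Algebra ℤ_[p] K]
  [IsScalarTower ℤ_[p] ℚ_[p] K]

variable (θ : 𝒪 p K)

variable (γ : 𝒪 p K →ₗ[ℤ_[p]] 𝒪 p K →ₗ[ℤ_[p]] 𝒪 p K)

/-- Engel-type argument for subsets of `ZMod p` closed under a partial addition: if `R x y` means
that the product of the root spaces of `x` and `y` is nonzero, then some element of the convex set
`X` is annihilated, modulo the complement of `X`, by all of the closed set `D`. -/
theorem exists_annihilated_s13 {p : ℕ} [Fact p.Prime] {R : ZMod p → ZMod p → Prop}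
    (hsymm : ∀ x y, R x y → R y x) (hzero : ∀ x, ¬ R x 0) (hself : ∀ x, ¬ R x x)
    (hjac : ∀ d b x, R b x → R d (b + x) → (R d b ∧ R (d + b) x) ∨ (R d x ∧ R b (d + x)))
    (n : ℕ) : ∀ D : Finset (ZMod p), D.card = n → 0 ∉ D →
      (∀ x ∈ D, ∀ y ∈ D, R x y → x + y ∈ D) → ∀ X : Finset (ZMod p), X.Nonempty →
      (∀ x ∈ X, ∀ d ∈ D, ∀ d' ∈ D, R d x → d + x ∉ X → R d' (d + x) → d' + (d + x) ∉ X) →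
      ∃ x ∈ X, ∀ d ∈ D, R d x → d + x ∉ X := by
  induction n using Nat.strong_induction_on with
  | _ n ih =>
  intro D hDn hD0 hD X hX hconv
  obtain rfl | hDne := D.eq_empty_or_nonempty
  · obtain ⟨x, hx⟩ := hX
    exact ⟨x, hx, by simp⟩
  classical
  obtain ⟨A, hA, hAmax⟩ := Finset.exists_max_image
    (D.ssubsets.filter fun A => ∀ x ∈ A, ∀ y ∈ A, R x y → x + y ∈ A) Finset.card
    ⟨∅, by simp [Finset.empty_ssubset, hDne]⟩
  rw [Finset.mem_filter, Finset.mem_ssubsets] at hA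
  obtain ⟨hAD, hAcl⟩ := hA
  have hA0 : (0 : ZMod p) ∉ A := fun h => hD0 (hAD.1 h)
  have hcard : A.card < n := hDn ▸ Finset.card_lt_card hAD
  obtain ⟨b, hb, hbA⟩ := ih A.card hcard A rfl hA0 hAcl (D \ A)
    (Finset.sdiff_nonempty.2 hAD.2) (by
      intro x hx d hd d' hd' hdx hnot h' hmem
      rw [Finset.mem_sdiff] at hx hnot hmem
      have h1 : d + x ∈ A := by
        by_contra h
        exact hnot ⟨hD d (hAD.1 hd) x hx.1 hdx, h⟩
      exact hmem.2 (hAcl d' hd' _ h1 h'))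
  rw [Finset.mem_sdiff] at hb
  have hbA' : ∀ d ∈ A, R d b → d + b ∈ A := by
    intro d hd h
    by_contra h'
    exact hbA d hd h (Finset.mem_sdiff.2 ⟨hD d (hAD.1 hd) b hb.1 h, h'⟩)
  have hins : insert b A = D := by
    by_contra hne
    have hss : insert b A ⊂ D :=
      lt_of_le_of_ne (Finset.insert_subset hb.1 hAD.1) hne
    have hcl : ∀ x ∈ insert b A, ∀ y ∈ insert b A, R x y → x + y ∈ insert b A := by
      intro x hx y hy hxy
      rw [Finset.mem_insert] at hx hy ⊢
      rcases hx with rfl | hx <;> rcases hy with rfl | hy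
      · exact (hself _ hxy).elim
      · exact Or.inr (add_comm y x ▸ hbA' y hy (hsymm _ _ hxy))
      · exact Or.inr (hbA' x hx hxy)
      · exact Or.inr (hAcl x hx y hy hxy)
    have := hAmax (insert b A) (Finset.mem_filter.2 ⟨Finset.mem_ssubsets.2 hss, hcl⟩)
    rw [Finset.card_insert_of_notMem hb.2] at this
    omega
  obtain ⟨x, hx, hxA⟩ := ih A.card hcard A rfl hA0 hAcl X hX
    (fun x hx d hd d' hd' => hconv x hx d (hAD.1 hd) d' (hAD.1 hd'))
  by_contra! hcon
  have hstep : ∀ y ∈ X, (∀ d ∈ A, R d y → d + y ∉ X) →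
      R b y ∧ b + y ∈ X ∧ ∀ d ∈ A, R d (b + y) → d + (b + y) ∉ X := by
    intro y hy hyA
    obtain ⟨d, hd, hdy, hmem⟩ := hcon y hy
    have hdb : d = b := by
      rw [← hins, Finset.mem_insert] at hd
      exact hd.resolve_right fun h => hyA d h hdy hmem
    subst hdb
    refine ⟨hdy, hmem, fun e he hey => ?_⟩
    rcases hjac e d y hdy hey with ⟨h1, h2⟩ | ⟨h1, h2⟩
    · rw [← add_assoc]
      exact hyA _ (hbA' e he h1) h2
    · rw [add_left_comm]
      exact hconv y hy e (hAD.1 he) d hb.1 h1 (hyA e he h1) h2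
  have hiter : ∀ m : ℕ, m * b + x ∈ X ∧ ∀ d ∈ A, R d (m * b + x) → d + (m * b + x) ∉ X := by
    intro m
    induction m with
    | zero => simpa using ⟨hx, hxA⟩
    | succ m ihm =>
      have h := (hstep _ ihm.1 ihm.2).2
      rwa [show b + ((m : ZMod p) * b + x) = ((m + 1 : ℕ) : ZMod p) * b + x by
        push_cast; ring] at h
  have hb0 : b ≠ 0 := fun h => hD0 (h ▸ hb.1)
  have h := hiter (-x / b).val
  rw [ZMod.natCast_zmod_val, div_mul_cancel₀ _ hb0, neg_add_cancel] at h
  exact hzero b (hstep 0 h.1 h.2).1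

theorem sum_shift {F : Type*} [Field F] {N : ℕ} {f : ℕ → F} (hf : ∀ l, f (l + N) = f l) {w : F}
    (hw : w ^ N = 1) :
    ∑ l ∈ Finset.range N, f (l + 1) * w ^ (l + 1) = ∑ l ∈ Finset.range N, f l * w ^ l := by
  have h := Finset.sum_range_succ' (fun l => f l * w ^ l) N
  rw [Finset.sum_range_succ] at h
  have h0 := hf 0
  rw [zero_add] at h0
  simp only [hw, h0, pow_zero] at h
  exact (add_right_cancel h).symm

/-- A periodic alternating system of structure constants that is compatible with the shift and
satisfies the Jacobi identity vanishes. -/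
theorem eq_zero_of_jacobi {p : ℕ} [Fact p.Prime] (hp : 2 < p) {α : ℕ → ℕ → ZMod p}
    (hper : ∀ j k, α (j + (p - 1)) k = α j k) (hanti : ∀ j k, α k j = -α j k)
    (hadd : ∀ j k, α j k = α (j + 1) k + α j (k + 1)) (h : ℕ)
    (hjac : ∀ a b c, α a b * α (a + b + h) c + α b c * α (b + c + h) a
      + α c a * α (c + a + h) b = 0) (j k : ℕ) : α j k = 0 := by
  have hper' : ∀ j k, α j (k + (p - 1)) = α j k := fun j k => by
    rw [hanti, hper, ← hanti]
  have hpw : ∀ z : ZMod p, z ≠ 0 → z⁻¹ ^ (p - 1) = 1 := fun z hz =>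
    ZMod.pow_card_sub_one_eq_one (inv_ne_zero hz)
  have hp1 : ((p - 1 : ℕ) : ZMod p) = -1 := by
    rw [Nat.cast_sub (by omega)]; simp
  set Z : ZMod p → ℕ → ZMod p := fun z n => ∑ l ∈ Finset.range (p - 1), α n l * z⁻¹ ^ l with hZ
  have hZsucc : ∀ z, z ≠ 0 → ∀ n, Z z (n + 1) = (1 - z) * Z z n := by
    intro z hz n
    have h1 := sum_shift (hper' n) (hpw z hz)
    have h2 : ∑ l ∈ Finset.range (p - 1), α n (l + 1) * z⁻¹ ^ l = z * Z z n := by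
      rw [hZ]
      simp only
      rw [← h1, Finset.mul_sum]
      refine Finset.sum_congr rfl fun l _ => ?_
      rw [pow_succ]; field_simp
    rw [sub_mul, one_mul, ← h2, hZ]
    simp only
    rw [← Finset.sum_sub_distrib]
    refine Finset.sum_congr rfl fun l _ => ?_
    rw [hadd n l]; ring
  have hZpow : ∀ z, z ≠ 0 → ∀ n, Z z n = (1 - z) ^ n * Z z 0 := by
    intro z hz n
    induction n with
    | zero => simp
    | succ n ih => rw [hZsucc z hz, ih, pow_succ]; ring
  set C : ZMod p → ZMod p := fun z => Z z 0 with hC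
  have hC1 : C 1 = 0 := by
    have h1 : Z 1 (p - 1) = Z 1 0 := by
      simp only [hZ]
      exact Finset.sum_congr rfl fun l _ => by rw [← hper 0 l, zero_add]
    rw [hC]
    simp only
    rw [← h1, hZpow 1 one_ne_zero]
    simp [show p - 1 ≠ 0 by omega]
  -- the double transform is supported on `x + y = 1`
  have hA : ∀ x y, x ≠ 0 → y ≠ 0 → x + y = 1 →
      ∑ j ∈ Finset.range (p - 1), ∑ k ∈ Finset.range (p - 1), α j k * x⁻¹ ^ j * y⁻¹ ^ k
        = - C y := by
    intro x y hx hy hxy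
    have : ∀ j ∈ Finset.range (p - 1),
        ∑ k ∈ Finset.range (p - 1), α j k * x⁻¹ ^ j * y⁻¹ ^ k = C y := by
      intro j _
      have h1 := hZpow y hy j
      have h2 : ∑ k ∈ Finset.range (p - 1), α j k * x⁻¹ ^ j * y⁻¹ ^ k = x⁻¹ ^ j * Z y j := by
        rw [hZ]; simp only
        rw [Finset.mul_sum]
        exact Finset.sum_congr rfl fun l _ => by ring
      rw [h2, h1, show 1 - y = x by rw [← hxy]; ring, ← mul_assoc, ← mul_pow,
        inv_mul_cancel₀ hx, one_pow, one_mul]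
    rw [Finset.sum_congr rfl this, Finset.sum_const, Finset.card_range, nsmul_eq_mul, hp1]
    ring
  have hCanti : ∀ x y, x ≠ 0 → y ≠ 0 → x + y = 1 → C x = - C y := by
    intro x y hx hy hxy
    have h1 := hA x y hx hy hxy
    have h2 := hA y x hy hx (by rw [add_comm, hxy])
    rw [Finset.sum_comm] at h2
    rw [← h1, ← neg_neg (C x), ← h2, ← Finset.sum_neg_distrib]
    refine Finset.sum_congr rfl fun j _ => ?_
    rw [← Finset.sum_neg_distrib]
    refine Finset.sum_congr rfl fun k _ => ?_
    rw [hanti j k]; ring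
  have hT : ∀ x y z, x ≠ 0 → y ≠ 0 → z ≠ 0 → x + y + z = 1 →
      ∑ a ∈ Finset.range (p - 1), ∑ b ∈ Finset.range (p - 1), ∑ c ∈ Finset.range (p - 1),
        α a b * α (a + b + h) c * (x⁻¹ ^ a * y⁻¹ ^ b * z⁻¹ ^ c)
        = - ((1 - z) ^ h * C z * C (y / (1 - z))) := by
    intro x y z hx hy hz hs
    have h1 : ∀ a b, ∑ c ∈ Finset.range (p - 1),
        α a b * α (a + b + h) c * (x⁻¹ ^ a * y⁻¹ ^ b * z⁻¹ ^ c)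
        = α a b * (x⁻¹ ^ a * y⁻¹ ^ b) * ((1 - z) ^ (a + b + h) * C z) := by
      intro a b
      rw [← hZpow z hz (a + b + h)]
      simp only [hZ]
      rw [Finset.mul_sum]
      exact Finset.sum_congr rfl fun l _ => by ring
    simp only [h1]
    by_cases hz1 : z = 1
    · subst hz1; simp [hC1]
    have hz1' : 1 - z ≠ 0 := sub_ne_zero.2 (Ne.symm hz1)
    have h2 := hA (x / (1 - z)) (y / (1 - z)) (div_ne_zero hx hz1') (div_ne_zero hy hz1')
      (by rw [← add_div, div_eq_one_iff_eq hz1', ← hs]; ring)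
    rw [← mul_neg, ← h2, Finset.mul_sum]
    refine Finset.sum_congr rfl fun a _ => ?_
    rw [Finset.mul_sum]
    refine Finset.sum_congr rfl fun b _ => ?_
    rw [inv_div, inv_div, div_pow, div_pow, inv_pow, inv_pow]
    field_simp
    ring
  have hTsum : ∀ x y z, x ≠ 0 → y ≠ 0 → z ≠ 0 → x + y + z = 1 →
      (1 - z) ^ h * C z * C (y / (1 - z)) + (1 - x) ^ h * C x * C (z / (1 - x))
        + (1 - y) ^ h * C y * C (x / (1 - y)) = 0 := by
    intro x y z hx hy hz hs
    have e1 := hT x y z hx hy hz hs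
    have e2 := hT y z x hy hz hx (by rw [← hs]; ring)
    have e3 := hT z x y hz hx hy (by rw [← hs]; ring)
    rw [Finset.sum_congr rfl fun b _ => Finset.sum_comm, Finset.sum_comm] at e2
    rw [Finset.sum_comm, Finset.sum_congr rfl fun b _ => Finset.sum_comm] at e3
    have hs0 : ∑ a ∈ Finset.range (p - 1), ∑ b ∈ Finset.range (p - 1),
        ∑ c ∈ Finset.range (p - 1), (α a b * α (a + b + h) c + α b c * α (b + c + h) a
        + α c a * α (c + a + h) b) * (x⁻¹ ^ a * y⁻¹ ^ b * z⁻¹ ^ c) = 0 := by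
      simp [hjac]
    rw [← neg_eq_zero]
    rw [← hs0, neg_add, neg_add, ← e1, ← e2, ← e3, ← Finset.sum_add_distrib,
      ← Finset.sum_add_distrib]
    refine Finset.sum_congr rfl fun a _ => ?_
    rw [← Finset.sum_add_distrib, ← Finset.sum_add_distrib]
    refine Finset.sum_congr rfl fun b _ => ?_
    rw [← Finset.sum_add_distrib, ← Finset.sum_add_distrib]
    exact Finset.sum_congr rfl fun c _ => by ring
  have h2ne : (2 : ZMod p) ≠ 0 := by
    intro h2
    have := (ZMod.natCast_eq_zero_iff 2 p).1 (by exact_mod_cast h2)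
    exact absurd (Nat.le_of_dvd (by norm_num) this) (by omega)
  let R : ZMod p → ZMod p → Prop := fun x y => x ≠ 0 ∧ y ≠ 0 ∧ x + y ≠ 0 ∧ C (y / (x + y)) ≠ 0
  have hRsymm : ∀ x y, R x y → R y x := by
    rintro x y ⟨hx, hy, hxy, hc⟩
    have hyx : y + x ≠ 0 := by rwa [add_comm]
    refine ⟨hy, hx, hyx, ?_⟩
    rw [hCanti (x / (y + x)) (y / (x + y)) (div_ne_zero hx hyx) (div_ne_zero hy hxy)
      (by rw [add_comm y x, ← add_div, div_self hxy])]
    exact neg_ne_zero.2 hc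
  have hRself : ∀ x, ¬ R x x := by
    rintro x ⟨hx, -, hxx, hc⟩
    have h1 := hCanti (x / (x + x)) (x / (x + x)) (div_ne_zero hx hxx) (div_ne_zero hx hxx)
      (by rw [← add_div, div_self hxx])
    have h3 : 2 * C (x / (x + x)) = 0 := by linear_combination h1
    exact hc ((mul_eq_zero.1 h3).resolve_left h2ne)
  have hRjac : ∀ d b x, R b x → R d (b + x) →
      (R d b ∧ R (d + b) x) ∨ (R d x ∧ R b (d + x)) := by
    rintro d b x ⟨hb, hx, hbx, hc⟩ ⟨hd, -, hs, hc'⟩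
    set s := d + (b + x) with hsdef
    have key := hTsum (d / s) (b / s) (x / s) (div_ne_zero hd hs) (div_ne_zero hb hs)
      (div_ne_zero hx hs) (by rw [← add_div, ← add_div, div_eq_one_iff_eq hs, hsdef]; ring)
    have f1 : 1 - x / s = (d + b) / s := by
      rw [eq_div_iff hs, sub_mul, div_mul_cancel₀ _ hs, hsdef]; ring
    have f2 : 1 - d / s = (b + x) / s := by
      rw [eq_div_iff hs, sub_mul, div_mul_cancel₀ _ hs, hsdef]; ring
    have f3 : 1 - b / s = (d + x) / s := by
      rw [eq_div_iff hs, sub_mul, div_mul_cancel₀ _ hs, hsdef]; ring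
    rw [f1, f2, f3, div_div_div_cancel_right₀ hs, div_div_div_cancel_right₀ hs,
      div_div_div_cancel_right₀ hs] at key
    have hCd : C (d / s) ≠ 0 := by
      rw [hCanti (d / s) ((b + x) / s) (div_ne_zero hd hs) (div_ne_zero hbx hs)
        (by rw [← add_div, div_self hs])]
      exact neg_ne_zero.2 hc'
    have hmid : ((b + x) / s) ^ h * C (d / s) * C (x / (b + x)) ≠ 0 :=
      mul_ne_zero (mul_ne_zero (pow_ne_zero _ (div_ne_zero hbx hs)) hCd) hc
    by_cases ht : ((d + b) / s) ^ h * C (x / s) * C (b / (d + b)) = 0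
    · right
      have ht' : ((d + x) / s) ^ h * C (b / s) * C (d / (d + x)) ≠ 0 := by
        intro h0
        rw [ht, h0, zero_add, add_zero] at key
        exact hmid key
      have g1 : C (b / s) ≠ 0 := right_ne_zero_of_mul (left_ne_zero_of_mul ht')
      have g2 : C (d / (d + x)) ≠ 0 := right_ne_zero_of_mul ht'
      have hdx : d + x ≠ 0 := by
        intro h0
        apply g1
        rw [show b / s = 1 by rw [div_eq_one_iff_eq hs]; linear_combination -h0]
        exact hC1
      refine ⟨hRsymm _ _ ⟨hx, hd, by rwa [add_comm], by rwa [add_comm x d]⟩,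
        hRsymm _ _ ⟨hdx, hb, ?_, ?_⟩⟩
      · rwa [show d + x + b = s by rw [hsdef]; ring]
      · rwa [show d + x + b = s by rw [hsdef]; ring]
    · left
      have g1 : C (x / s) ≠ 0 := right_ne_zero_of_mul (left_ne_zero_of_mul ht)
      have g2 : C (b / (d + b)) ≠ 0 := right_ne_zero_of_mul ht
      have hdb : d + b ≠ 0 := by
        intro h0
        apply g1
        rw [show x / s = 1 by rw [div_eq_one_iff_eq hs]; linear_combination -h0]
        exact hC1
      refine ⟨⟨hd, hb, hdb, g2⟩, hdb, hx, ?_, ?_⟩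
      · rwa [show d + b + x = s by rw [hsdef]; ring]
      · rwa [show d + b + x = s by rw [hsdef]; ring]
  obtain ⟨x, hx, hxR⟩ := exists_annihilated_s13 hRsymm (fun x hx => hx.2.1 rfl) hRself hRjac _
    (Finset.univ.erase 0) rfl (by simp) (fun x _ y _ hxy => by simpa using hxy.2.2.1)
    (Finset.univ.erase 0) ⟨1, by simp⟩ (by
      intro x hx d _ d' _ hdx hnot
      exact absurd (by simpa using hdx.2.2.1) hnot)
  have hx0 : x ≠ 0 := by simpa using hx
  have hCzero : ∀ z, z ≠ 0 → C z = 0 := by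
    intro z hz
    by_cases hz1 : z = 1
    · rw [hz1, hC1]
    by_contra hCz
    have hd : x * (1 - z) / z + x = x / z := by field_simp; ring
    have hR : R (x * (1 - z) / z) x := by
      refine ⟨div_ne_zero (mul_ne_zero hx0 (sub_ne_zero.2 (Ne.symm hz1))) hz, hx0, ?_, ?_⟩
      · rw [hd]; exact div_ne_zero hx0 hz
      · rw [hd, div_div_cancel₀ hx0]; exact hCz
    exact hxR _ (by simpa using hR.1) hR (by simpa using hR.2.2.1)
  have hα0 : ∀ l, α 0 l = 0 := by
    set P : Polynomial (ZMod p) :=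
      ∑ l ∈ Finset.range (p - 1), Polynomial.C (α 0 l) * Polynomial.X ^ l with hP
    have hPdeg : P.degree < (p - 1 : ℕ) := by
      rw [hP]
      refine (Polynomial.degree_sum_le _ _).trans_lt ?_
      rw [Finset.sup_lt_iff (WithBot.bot_lt_coe _)]
      intro l hl
      refine (Polynomial.degree_C_mul_X_pow_le _ _).trans_lt ?_
      exact_mod_cast Finset.mem_range.1 hl
    have hP0 : P = 0 := by
      refine Polynomial.eq_zero_of_degree_lt_of_eval_finset_eq_zero (Finset.univ.erase 0) ?_ ?_
      · rwa [Finset.card_erase_of_mem (Finset.mem_univ _), Finset.card_univ, ZMod.card]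
      · intro z hz
        have h1 := hCzero z⁻¹ (inv_ne_zero (by simpa using hz))
        simp only [hC, hZ, inv_inv] at h1
        rw [hP, Polynomial.eval_finsetSum]
        simpa using h1
    intro l
    have hl : α 0 (l % (p - 1)) = α 0 l :=
      Function.Periodic.map_mod_nat (f := α 0) (hper' 0) l
    rw [← hl]
    have h1 := congrArg (fun Q => Polynomial.coeff Q (l % (p - 1))) hP0
    have h2 : l % (p - 1) < p - 1 := Nat.mod_lt _ (by omega)
    simpa [hP, Polynomial.finsetSum_coeff, Polynomial.coeff_C_mul, Polynomial.coeff_X_pow, h2]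
      using h1
  have hall : ∀ j k, α j k = 0 := by
    intro j
    induction j with
    | zero => exact hα0
    | succ j ih =>
      intro k
      have h1 := hadd j k
      rw [ih, ih, add_zero] at h1
      exact h1.symm
  exact hall j k

theorem cyclotomic_comp_isEisensteinAt :
    ((Polynomial.cyclotomic p ℤ_[p]).comp (Polynomial.X + 1)).IsEisensteinAt
      (Ideal.span {(p : ℤ_[p])}) := by
  have hprime := PadicInt.prime_p (p := p)
  have hmap : (Polynomial.cyclotomic p ℤ_[p]).comp (Polynomial.X + 1)
      = ((Polynomial.cyclotomic p ℤ).comp (Polynomial.X + 1)).map (Int.castRingHom ℤ_[p]) := by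
    simp [Polynomial.map_comp]
  have hmonic : ((Polynomial.cyclotomic p ℤ_[p]).comp (Polynomial.X + 1)).Monic :=
    (Polynomial.cyclotomic.monic p ℤ_[p]).comp_X_add_C 1
  refine hmonic.isEisensteinAt_of_mem_of_notMem ?_ ?_ ?_
  · exact fun h => hprime.not_isUnit (Ideal.span_singleton_eq_top.1 h)
  · intro n hn
    have h := (cyclotomic_comp_X_add_one_isEisensteinAt p).isWeaklyEisensteinAt.map
      (Int.castRingHom ℤ_[p])
    rw [← hmap, Ideal.map_span] at h
    simpa using h.mem hn
  · rw [Polynomial.coeff_zero_eq_eval_zero, Polynomial.eval_comp]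
    simp only [Polynomial.eval_add, Polynomial.eval_X, Polynomial.eval_one, zero_add]
    rw [Polynomial.eval_one_cyclotomic_prime, Ideal.span_singleton_pow,
      Ideal.mem_span_singleton]
    rintro ⟨c, hc⟩
    rw [pow_two, mul_assoc] at hc
    have : (1 : ℤ_[p]) = p * c := mul_left_cancel₀ hprime.ne_zero (by rw [mul_one]; exact hc)
    exact hprime.not_isUnit (IsUnit.of_mul_eq_one c this.symm)

variable {p K} in
theorem exists_pow_smul_mem_adjoin {x : K} (hx : Algebra.adjoin ℚ_[p] {x} = ⊤) (z : K) :
    ∃ n : ℕ, (p : ℤ_[p]) ^ n • z ∈ Algebra.adjoin ℤ_[p] {x} := by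
  have hz : z ∈ Algebra.adjoin ℚ_[p] {x} := hx ▸ Algebra.mem_top
  induction hz using Algebra.adjoin_induction with
  | mem y hy => exact ⟨0, by simpa using Algebra.subset_adjoin hy⟩
  | algebraMap r =>
    obtain ⟨a, b, hb, rfl⟩ := IsFractionRing.div_surjective (A := ℤ_[p]) r
    have hb0 : b ≠ 0 := nonZeroDivisors.ne_zero hb
    have hbK : algebraMap ℤ_[p] ℚ_[p] b ≠ 0 := by
      simpa using hb0
    refine ⟨b.valuation, ?_⟩
    have hspec := PadicInt.unitCoeff_spec hb0
    have : (p : ℤ_[p]) ^ b.valuation = b * ((PadicInt.unitCoeff hb0)⁻¹ : ℤ_[p]ˣ) := by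
      rw [Units.eq_mul_inv_iff_mul_eq, mul_comm]
      exact hspec.symm
    have key : (p : ℤ_[p]) ^ b.valuation • algebraMap ℚ_[p] K
        (algebraMap ℤ_[p] ℚ_[p] a / algebraMap ℤ_[p] ℚ_[p] b)
        = algebraMap ℤ_[p] K (a * ((PadicInt.unitCoeff hb0)⁻¹ : ℤ_[p]ˣ)) := by
      rw [this, Algebra.smul_def, IsScalarTower.algebraMap_apply ℤ_[p] ℚ_[p] K,
        IsScalarTower.algebraMap_apply ℤ_[p] ℚ_[p] K, ← map_mul]
      congr 1
      rw [map_mul, map_mul]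
      field_simp
    rw [key]
    exact Subalgebra.algebraMap_mem _ _
  | add y z _ _ hy hz =>
    obtain ⟨n, hn⟩ := hy
    obtain ⟨m, hm⟩ := hz
    refine ⟨n + m, ?_⟩
    have h1 := Subalgebra.smul_mem _ hn ((p : ℤ_[p]) ^ m)
    have h2 := Subalgebra.smul_mem _ hm ((p : ℤ_[p]) ^ n)
    rw [smul_comm] at h1
    rw [smul_add, pow_add, mul_smul, mul_smul]
    exact Subalgebra.add_mem _ h1 h2
  | mul y z _ _ hy hz =>
    obtain ⟨n, hn⟩ := hy
    obtain ⟨m, hm⟩ := hz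
    refine ⟨n + m, ?_⟩
    rw [pow_add, ← smul_mul_smul_comm]
    exact Subalgebra.mul_mem _ hn hm

variable {p K θ} in
theorem adjoin_sub_one_eq_top (hθ : IsPrimitiveRoot (θ : K) p)
    (hgen : Algebra.adjoin ℚ_[p] {(θ : K)} = ⊤) :
    Algebra.adjoin ℤ_[p] {θ - 1} = (⊤ : Subalgebra ℤ_[p] (𝒪 p K)) := by
  set k : K := ((θ - 1 : 𝒪 p K) : K) with hk
  have hkθ : k = (θ : K) - 1 := by simp [hk]
  have hkint : IsIntegral ℤ_[p] k := (θ - 1).2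
  have hgen' : Algebra.adjoin ℚ_[p] {k} = ⊤ := by
    rw [eq_top_iff, ← hgen, Algebra.adjoin_le_iff, Set.singleton_subset_iff]
    have := Subalgebra.add_mem _ (Algebra.self_mem_adjoin_singleton ℚ_[p] k)
      (Subalgebra.one_mem _)
    rwa [hkθ, sub_add_cancel] at this
  set f := (Polynomial.cyclotomic p ℤ_[p]).comp (Polynomial.X + 1) with hf
  have hmonic : f.Monic := (Polynomial.cyclotomic.monic p ℤ_[p]).comp_X_add_C 1
  have heis := cyclotomic_comp_isEisensteinAt p
  have hinj : Function.Injective (algebraMap ℤ_[p] K) := by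
    rw [IsScalarTower.algebraMap_eq ℤ_[p] ℚ_[p] K]
    exact (algebraMap ℚ_[p] K).injective.comp (IsFractionRing.injective ℤ_[p] ℚ_[p])
  have : Module.IsTorsionFree ℤ_[p] K :=
    Module.isTorsionFree_iff_algebraMap_injective.mpr hinj
  have hroot : Polynomial.aeval k f = 0 := by
    rw [hf, Polynomial.aeval_comp]
    simp only [map_add, Polynomial.aeval_X, map_one]
    rw [hkθ, sub_add_cancel, Polynomial.aeval_def, ← Polynomial.eval_map,
      Polynomial.map_cyclotomic]
    exact hθ.isRoot_cyclotomic (Fact.out : p.Prime).pos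
  have hirr : Irreducible f := by
    refine heis.irreducible ?_ hmonic.isPrimitive ?_
    · exact (Ideal.span_singleton_prime PadicInt.prime_p.ne_zero).2 PadicInt.prime_p
    · rw [Polynomial.natDegree_comp, Polynomial.natDegree_cyclotomic,
        show (Polynomial.X + 1 : Polynomial ℤ_[p]) = Polynomial.X + Polynomial.C 1 by simp,
        Polynomial.natDegree_X_add_C, mul_one]
      exact Nat.totient_pos.2 (Fact.out : p.Prime).pos
  have hmin : minpoly ℤ_[p] k = f := by
    have hdvd := minpoly.isIntegrallyClosed_dvd hkint hroot
    refine Polynomial.eq_of_monic_of_associated (minpoly.monic hkint) hmonic ?_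
    exact (minpoly.prime_of_isIntegrallyClosed hkint).irreducible.associated_of_dvd hirr hdvd
  let B : PowerBasis ℚ_[p] K := PowerBasis.ofAdjoinEqTop hkint.tower_top hgen'
  have hBgen : B.gen = k := PowerBasis.ofAdjoinEqTop_gen _ _
  rw [eq_top_iff]
  rintro z -
  obtain ⟨n, hn⟩ := exists_pow_smul_mem_adjoin hgen' (z : K)
  have hmem : (z : K) ∈ Algebra.adjoin ℤ_[p] {k} := by
    rw [← hBgen] at hn ⊢
    exact mem_adjoin_of_smul_prime_pow_smul_of_minpoly_isEisensteinAt PadicInt.prime_p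
      (hBgen ▸ hkint) z.2 hn (by rw [hBgen, hmin]; exact heis)
  have hmapadj := AlgHom.map_adjoin_singleton (𝒪 p K).val (θ - 1)
  have : (z : K) ∈ (Algebra.adjoin ℤ_[p] {θ - 1}).map (𝒪 p K).val := by
    rw [hmapadj]; exact hmem
  obtain ⟨y, hy, hyz⟩ := this
  have : y = z := Subtype.ext hyz
  exact this ▸ hy

/-- `κ` generates the maximal ideal of the local domain `O = ℤ_p[κ]`, with residue field `𝔽_p`
(via `ρ`), and `p = κ ^ (p - 1) * u` with `ρ u = -1`. -/
structure IsUniformizer {q : ℕ} [Fact q.Prime] {O : Type*} [CommRing O] [Algebra ℤ_[q] O]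
    (κ u : O) (ρ : O →+* ZMod q) : Prop where
  ne_zero : κ ≠ 0
  map_eq_zero_iff : ∀ x, ρ x = 0 ↔ κ ∣ x
  isUnit_of_map_ne_zero : ∀ x, ρ x ≠ 0 → IsUnit x
  natCast_eq : (q : O) = κ ^ (q - 1) * u
  map_unit : ρ u = -1
  adjoin_eq_top : Algebra.adjoin ℤ_[q] {κ} = ⊤
  eq_zero_of_forall_dvd : ∀ x, (∀ n : ℕ, κ ^ n ∣ x) → x = 0

theorem exists_mul_eq_pow_sub_one {q : ℕ} [Fact q.Prime] {O : Type*} [CommRing O] [IsDomain O]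
    {t : O} (ht : t ^ q = 1) (ht1 : t ≠ 1) :
    ∃ w : O, (q : O) * w = (t - 1) ^ (q - 1) ∧ t - 1 ∣ w + 1 := by
  have hq : q.Prime := Fact.out
  have h0 : t - 1 ≠ 0 := sub_ne_zero.2 ht1
  have h := add_pow_prime_eq hq (t - 1) 1
  have h1 : (1 : ℕ) ∈ Finset.Ioo 0 q := Finset.mem_Ioo.2 ⟨one_pos, hq.one_lt⟩
  rw [sub_add_cancel, ht, one_pow, ← Finset.add_sum_erase _ _ h1] at h
  have hdvd : t - 1 ∣ ∑ k ∈ (Finset.Ioo 0 q).erase 1,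
      (t - 1) ^ (k - 1) * 1 ^ (q - k - 1) * ((q.choose k / q : ℕ) : O) := by
    refine Finset.dvd_sum fun k hk => ?_
    simp only [Finset.mem_erase, Finset.mem_Ioo] at hk
    rw [mul_assoc]
    exact Dvd.dvd.mul_right (dvd_pow_self _ (by omega)) _
  obtain ⟨r, hr⟩ := hdvd
  rw [hr, Nat.choose_one_right, Nat.div_self hq.pos] at h
  refine ⟨-(1 + (t - 1) * r), ?_, ⟨-r, by ring⟩⟩
  apply mul_left_cancel₀ h0
  rw [mul_pow_sub_one hq.ne_zero]
  simp only [tsub_self, pow_zero, one_pow, Nat.cast_one, mul_one] at h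
  linear_combination h

variable {p K θ} in
theorem exists_isUniformizer (hθ : IsPrimitiveRoot (θ : K) p)
    (hgen : Algebra.adjoin ℚ_[p] {(θ : K)} = ⊤) :
    ∃ (u : 𝒪 p K) (ρ : 𝒪 p K →+* ZMod p), IsUniformizer (θ - 1) u ρ := by
  have hp : p.Prime := Fact.out
  have htop := adjoin_sub_one_eq_top hθ hgen
  have hθ' : IsPrimitiveRoot θ p := IsPrimitiveRoot.coe_submonoidClass_iff.1 hθ
  obtain ⟨w, hw, hw1⟩ := exists_mul_eq_pow_sub_one hθ'.pow_eq_one (hθ'.ne_one hp.one_lt)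
  set κ := θ - 1 with hκ
  have hpmap : algebraMap ℤ_[p] (𝒪 p K) p = p := map_natCast _ _
  have hκp : κ ∣ (p : 𝒪 p K) := by
    have h1 : (p : 𝒪 p K) = p * (w + 1) - κ ^ (p - 1) := by rw [← hw]; ring
    rw [h1]
    exact dvd_sub (Dvd.dvd.mul_left hw1 _) (dvd_pow_self _ (Nat.sub_ne_zero_of_lt hp.one_lt))
  have hmax : ∀ M : Ideal (𝒪 p K), M.IsMaximal → (p : 𝒪 p K) ∈ M ∧ κ ∈ M := by
    intro M hM
    have h1 : (M.comap (algebraMap ℤ_[p] (𝒪 p K))).IsMaximal :=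
      Ideal.isMaximal_comap_of_isIntegral_of_isMaximal M
    have h2 : (p : ℤ_[p]) ∈ M.comap (algebraMap ℤ_[p] (𝒪 p K)) := by
      rw [IsLocalRing.eq_maximalIdeal h1, PadicInt.maximalIdeal_eq_span_p]
      exact Ideal.mem_span_singleton_self _
    rw [Ideal.mem_comap, hpmap] at h2
    refine ⟨h2, hM.isPrime.mem_of_pow_mem (p - 1) ?_⟩
    rw [← hw]
    exact M.mul_mem_right _ h2
  have hres : ∀ x : 𝒪 p K, ∃ d : ℤ_[p], κ ∣ x - algebraMap ℤ_[p] (𝒪 p K) d := by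
    intro x
    have hx : x ∈ Algebra.adjoin ℤ_[p] {κ} := htop ▸ Algebra.mem_top
    induction hx using Algebra.adjoin_induction with
    | mem y hy => exact ⟨0, by simp [Set.mem_singleton_iff.1 hy]⟩
    | algebraMap r => exact ⟨r, by simp⟩
    | add y z _ _ hy hz =>
      obtain ⟨⟨d, hd⟩, e, he⟩ := hy, hz
      exact ⟨d + e, by rw [map_add, add_sub_add_comm]; exact dvd_add hd he⟩
    | mul y z _ _ hy hz =>
      obtain ⟨⟨d, hd⟩, e, he⟩ := hy, hz
      refine ⟨d * e, ?_⟩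
      rw [map_mul, show y * z - algebraMap ℤ_[p] (𝒪 p K) d * algebraMap ℤ_[p] (𝒪 p K) e
        = (y - algebraMap ℤ_[p] (𝒪 p K) d) * z
          + algebraMap ℤ_[p] (𝒪 p K) d * (z - algebraMap ℤ_[p] (𝒪 p K) e) by ring]
      exact dvd_add (Dvd.dvd.mul_right hd _) (Dvd.dvd.mul_left he _)
  have hunit : ∀ x : 𝒪 p K, ¬ κ ∣ x → IsUnit x := by
    intro x hx
    by_contra hnu
    obtain ⟨M, hM, hxM⟩ := exists_max_ideal_of_mem_nonunits hnu
    obtain ⟨hpM, hκM⟩ := hmax M hM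
    obtain ⟨d, hd⟩ := hres x
    have hdM : algebraMap ℤ_[p] (𝒪 p K) d ∈ M := by
      have := M.sub_mem hxM (M.mem_of_dvd hd hκM)
      rwa [sub_sub_cancel] at this
    have hdnu : ¬ IsUnit d := fun h =>
      hM.ne_top (M.eq_top_of_isUnit_mem hdM (h.map _))
    have hpd : (p : ℤ_[p]) ∣ d := by
      rw [← Ideal.mem_span_singleton, ← PadicInt.maximalIdeal_eq_span_p]
      exact hdnu
    have hκd : κ ∣ algebraMap ℤ_[p] (𝒪 p K) d :=
      hκp.trans (hpmap ▸ map_dvd (algebraMap ℤ_[p] (𝒪 p K)) hpd)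
    exact hx ((dvd_sub_left hκd).1 hd)
  have hκnu : ¬ IsUnit κ := by
    intro h
    obtain ⟨M, hM⟩ := Ideal.exists_maximal (𝒪 p K)
    exact hM.ne_top (M.eq_top_of_isUnit_mem (hmax M hM).2 h)
  have hwu : IsUnit w := hunit w fun h => hκnu (isUnit_of_dvd_one ((dvd_add_right h).1 hw1))
  obtain ⟨v, rfl⟩ := hwu
  have hpu : (p : 𝒪 p K) = κ ^ (p - 1) * (v⁻¹ : (𝒪 p K)ˣ) := by
    rw [← hw, mul_assoc, Units.mul_inv, mul_one]
  set I : Ideal (𝒪 p K) := Ideal.span {κ} with hI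
  have hItop : I ≠ ⊤ := fun h => hκnu (Ideal.span_singleton_eq_top.1 h)
  have : Nontrivial (𝒪 p K ⧸ I) := Ideal.Quotient.nontrivial_iff.2 hItop
  have hp0 : ((p : ℕ) : 𝒪 p K ⧸ I) = 0 := by
    rw [← map_natCast (Ideal.Quotient.mk I), Ideal.Quotient.eq_zero_iff_mem]
    exact Ideal.mem_span_singleton.2 hκp
  have hchar : CharP (𝒪 p K ⧸ I) p := (CharP.charP_iff_prime_eq_zero hp).2 hp0
  have hbij : Function.Bijective (ZMod.castHom dvd_rfl (𝒪 p K ⧸ I) : ZMod p →+* _) := by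
    refine ⟨RingHom.injective _, fun y => ?_⟩
    obtain ⟨x, rfl⟩ := Ideal.Quotient.mk_surjective y
    obtain ⟨d, hd⟩ := hres x
    have hd' : (p : ℤ_[p]) ∣ d - d.zmodRepr := by
      rw [← Ideal.mem_span_singleton, ← PadicInt.maximalIdeal_eq_span_p]
      exact d.sub_zmodRepr_mem
    refine ⟨d.zmodRepr, ?_⟩
    rw [map_natCast, ← map_natCast (Ideal.Quotient.mk I), Ideal.Quotient.eq, ← neg_mem_iff,
      neg_sub, hI, Ideal.mem_span_singleton]
    have h1 := hκp.trans (hpmap ▸ map_dvd (algebraMap ℤ_[p] (𝒪 p K)) hd')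
    rw [map_sub, map_natCast] at h1
    have h2 := dvd_add hd h1
    rwa [sub_add_sub_cancel] at h2
  let e := RingEquiv.ofBijective _ hbij
  let ρ : 𝒪 p K →+* ZMod p := (e.symm : (𝒪 p K ⧸ I) →+* ZMod p).comp (Ideal.Quotient.mk I)
  have hker : ∀ x, ρ x = 0 ↔ κ ∣ x := by
    intro x
    simp only [ρ, RingHom.comp_apply]
    rw [← Ideal.mem_span_singleton, ← hI, ← Ideal.Quotient.eq_zero_iff_mem]
    exact e.symm.map_eq_zero_iff
  refine ⟨(v⁻¹ : (𝒪 p K)ˣ), ρ, sub_ne_zero.2 (hθ'.ne_one hp.one_lt), hker,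
    fun x hx => hunit x fun h => hx ((hker x).2 h), hpu, ?_, htop, ?_⟩
  · have h1 := (hker _).2 hw1
    rw [map_add, map_one] at h1
    have h2 : ρ (v⁻¹ : (𝒪 p K)ˣ) * ρ v = 1 := by rw [← map_mul, Units.inv_mul, map_one]
    linear_combination -h2 + ρ (v⁻¹ : (𝒪 p K)ˣ) * h1
  · intro x hx
    have hfin : Module.Finite ℤ_[p] (𝒪 p K) := by
      have := (Algebra.IsIntegral.isIntegral (R := ℤ_[p]) κ).fg_adjoin_singleton
      rw [htop] at this
      exact ⟨this⟩
    have : IsNoetherianRing (𝒪 p K) := IsNoetherianRing.of_finite ℤ_[p] _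
    have h1 := Ideal.iInf_pow_eq_bot_of_isDomain I hItop
    have : x ∈ ⨅ n : ℕ, I ^ n := by
      rw [Ideal.mem_iInf]
      intro n
      rw [hI, Ideal.span_singleton_pow, Ideal.mem_span_singleton]
      exact hx n
    rwa [h1] at this

section Leading

variable {q : ℕ} [Fact q.Prime] {O : Type*} [CommRing O] [Algebra ℤ_[q] O]
  {κ u : O} {ρ : O →+* ZMod q} {δ : O →ₗ[ℤ_[q]] O →ₗ[ℤ_[q]] O}

theorem IsUniformizer.span_pow_eq_top (hκ : IsUniformizer κ u ρ) :
    Submodule.span ℤ_[q] (Set.range fun m : ℕ => κ ^ m) = ⊤ := by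
  have h := Algebra.adjoin_eq_span ℤ_[q] {κ}
  rw [hκ.adjoin_eq_top, Algebra.top_toSubmodule] at h
  rw [h]
  congr 1
  ext x
  simp [Submonoid.mem_closure_singleton]

theorem IsUniformizer.exists_eq_natCast_add (hκ : IsUniformizer κ u ρ) (x : O) :
    ∃ (m : ℕ) (y : O), x = m + κ * y ∧ (m : ZMod q) = ρ x := by
  have h : ρ (x - ((ρ x).val : ℕ)) = 0 := by
    rw [map_sub, map_natCast, ZMod.natCast_zmod_val, sub_self]
  obtain ⟨y, hy⟩ := (hκ.map_eq_zero_iff _).1 h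
  exact ⟨(ρ x).val, y, by rw [← hy]; ring, ZMod.natCast_zmod_val _⟩

theorem dvd_of_forall_pow_dvd (hκ : IsUniformizer κ u ρ) {n s : ℕ}
    (hdvd : ∀ j k, κ ^ (j + k + n) ∣ κ ^ s * δ (κ ^ j) (κ ^ k)) (j k : ℕ) (x y : O) :
    κ ^ (j + k + n) ∣ κ ^ s * δ (κ ^ j * x) (κ ^ k * y) := by
  have hx : x ∈ Submodule.span ℤ_[q] (Set.range fun m : ℕ => κ ^ m) :=
    hκ.span_pow_eq_top ▸ Submodule.mem_top
  have hy : y ∈ Submodule.span ℤ_[q] (Set.range fun m : ℕ => κ ^ m) :=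
    hκ.span_pow_eq_top ▸ Submodule.mem_top
  induction hx using Submodule.span_induction with
  | mem x hx =>
    obtain ⟨a, rfl⟩ := hx
    induction hy using Submodule.span_induction with
    | mem y hy =>
      obtain ⟨b, rfl⟩ := hy
      simp only [← pow_add]
      exact (pow_dvd_pow κ (by omega)).trans (hdvd (j + a) (k + b))
    | zero => simp
    | add y z _ _ hy hz =>
      rw [mul_add, map_add, mul_add]
      exact dvd_add hy hz
    | smul r y _ hy =>
      rw [mul_smul_comm, map_smul, mul_smul_comm, Algebra.smul_def]
      exact Dvd.dvd.mul_left hy _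
  | zero => simp
  | add y z _ _ hy hz =>
    rw [mul_add, map_add, LinearMap.add_apply, mul_add]
    exact dvd_add hy hz
  | smul r y _ hy =>
    rw [mul_smul_comm, map_smul, LinearMap.smul_apply, mul_smul_comm, Algebra.smul_def]
    exact Dvd.dvd.mul_left hy _

/-- `α` lists the leading coefficients of `δ`: up to the factor `κ ^ s`, the value of `δ` at
`κ ^ j * x` and `κ ^ k * y` is `α j k * ρ x * ρ y * κ ^ (j + k + n)` to first order. -/
def IsLeading (κ : O) (ρ : O →+* ZMod q) (δ : O →ₗ[ℤ_[q]] O →ₗ[ℤ_[q]] O) (n s : ℕ)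
    (α : ℕ → ℕ → ZMod q) : Prop :=
  ∀ j k x y, ∃ r, κ ^ s * δ (κ ^ j * x) (κ ^ k * y) = κ ^ (j + k + n) * r ∧
    ρ r = α j k * ρ x * ρ y

theorem exists_isLeading (hκ : IsUniformizer κ u ρ) {n s : ℕ}
    (hdvd : ∀ j k, κ ^ (j + k + n) ∣ κ ^ s * δ (κ ^ j) (κ ^ k)) :
    ∃ α, IsLeading κ ρ δ n s α := by
  choose g hg using hdvd
  refine ⟨fun j k => ρ (g j k), fun j k x y => ?_⟩
  obtain ⟨a, x', hx, ha⟩ := hκ.exists_eq_natCast_add x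
  obtain ⟨b, y', hy, hb⟩ := hκ.exists_eq_natCast_add y
  obtain ⟨r₁, hr₁⟩ := dvd_of_forall_pow_dvd hκ (fun j k => ⟨_, hg j k⟩) j (k + 1) 1 y'
  obtain ⟨r₂, hr₂⟩ := dvd_of_forall_pow_dvd hκ (fun j k => ⟨_, hg j k⟩) (j + 1) k x' y
  rw [mul_one] at hr₁
  have hρκ : ρ κ = 0 := (hκ.map_eq_zero_iff κ).2 dvd_rfl
  refine ⟨a * b * g j k + κ * (a * r₁ + r₂), ?_, ?_⟩
  · have e1 : κ ^ j * x = a • κ ^ j + κ ^ (j + 1) * x' := by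
      rw [hx, nsmul_eq_mul, pow_succ]; ring
    have e2 : κ ^ k * y = b • κ ^ k + κ ^ (k + 1) * y' := by
      rw [hy, nsmul_eq_mul, pow_succ]; ring
    have e3 : δ (κ ^ j * x) (κ ^ k * y) = a * (b * δ (κ ^ j) (κ ^ k)
        + δ (κ ^ j) (κ ^ (k + 1) * y')) + δ (κ ^ (j + 1) * x') (κ ^ k * y) := by
      rw [e1, map_add, LinearMap.add_apply, map_nsmul, LinearMap.smul_apply, nsmul_eq_mul]
      conv_lhs => rw [e2, map_add, map_nsmul, nsmul_eq_mul, ← e2]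
    have hr₁' : κ ^ s * δ (κ ^ j) (κ ^ (k + 1) * y') = κ ^ (j + k + n) * κ * r₁ := by
      rw [hr₁, ← pow_succ]; congr 2; ring
    have hr₂' : κ ^ s * δ (κ ^ (j + 1) * x') (κ ^ k * y) = κ ^ (j + k + n) * κ * r₂ := by
      rw [hr₂, ← pow_succ]; congr 2; ring
    rw [e3]
    linear_combination (a : O) * b * hg j k + a * hr₁' + hr₂'
  · simp only [map_add, map_mul, map_natCast, hρκ, ha, hb]; ring

variable [IsDomain O]

namespace IsLeading

variable {n s : ℕ} {α : ℕ → ℕ → ZMod q}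

theorem eq_of_eq (hκ : IsUniformizer κ u ρ) (hα : IsLeading κ ρ δ n s α) (j k : ℕ) {r : O}
    (h : κ ^ s * δ (κ ^ j) (κ ^ k) = κ ^ (j + k + n) * r) : α j k = ρ r := by
  obtain ⟨t, ht, hρ⟩ := hα j k 1 1
  rw [mul_one, mul_one, h] at ht
  rw [mul_left_cancel₀ (pow_ne_zero _ hκ.ne_zero) ht, hρ]
  simp

theorem neg_swap (hκ : IsUniformizer κ u ρ) (hα : IsLeading κ ρ δ n s α)
    (halt : ∀ x, δ x x = 0) (j k : ℕ) : α k j = -α j k := by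
  obtain ⟨t, ht, hρ⟩ := hα j k 1 1
  have hsw : δ (κ ^ k) (κ ^ j) = - δ (κ ^ j) (κ ^ k) := by
    have h := halt (κ ^ j + κ ^ k)
    simp only [map_add, LinearMap.add_apply, halt] at h
    linear_combination h
  rw [hα.eq_of_eq hκ k j (r := -t), map_neg, hρ]
  · simp
  · rw [mul_one, mul_one] at ht
    rw [hsw, mul_neg, ht, add_comm k j, mul_neg]

theorem periodic (hκ : IsUniformizer κ u ρ) (hα : IsLeading κ ρ δ n s α) (j k : ℕ) :
    α (j + (q - 1)) k = α j k := by
  obtain ⟨t, ht, hρ⟩ := hα j k 1 1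
  obtain ⟨r, hr, hρr⟩ := hα (j + (q - 1)) k u 1
  rw [mul_one, mul_one] at ht
  have h1 : κ ^ (j + (q - 1)) * u = q • κ ^ j := by
    rw [nsmul_eq_mul, hκ.natCast_eq]; ring
  have h2 : κ ^ (j + (q - 1) + k + n) * (u * t) = κ ^ (j + (q - 1) + k + n) * r := by
    rw [← hr, mul_one, h1, map_nsmul, LinearMap.smul_apply, nsmul_eq_mul,
      mul_left_comm (κ ^ s) (q : O), ht, hκ.natCast_eq]
    ring
  rw [← mul_left_cancel₀ (pow_ne_zero _ hκ.ne_zero) h2, map_mul, hρ, hκ.map_unit] at hρr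
  simp only [map_one, mul_one] at hρr
  linear_combination hρr

theorem eq_add (hκ : IsUniformizer κ u ρ) (hα : IsLeading κ ρ δ n s α)
    (hequi : ∀ x y, δ ((1 + κ) * x) ((1 + κ) * y) = (1 + κ) * δ x y) (j k : ℕ) :
    α j k = α (j + 1) k + α j (k + 1) := by
  obtain ⟨t, ht, hρ⟩ := hα j k 1 1
  obtain ⟨t₁, ht₁, hρ₁⟩ := hα (j + 1) k 1 1
  obtain ⟨t₂, ht₂, hρ₂⟩ := hα j (k + 1) 1 1
  obtain ⟨t₃, ht₃, hρ₃⟩ := hα (j + 1) (k + 1) 1 1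
  simp only [mul_one, map_one] at *
  have h := hequi (κ ^ j) (κ ^ k)
  rw [show (1 + κ) * κ ^ j = κ ^ j + κ ^ (j + 1) by ring,
    show (1 + κ) * κ ^ k = κ ^ k + κ ^ (k + 1) by ring] at h
  simp only [map_add, LinearMap.add_apply] at h
  have h1 : κ ^ (j + k + n + 1) * t = κ ^ (j + k + n + 1) * (t₁ + t₂ + κ * t₃) := by
    linear_combination -κ ^ s * h - κ * ht + ht₁ + ht₂ + ht₃
  have h2 := congrArg ρ (mul_left_cancel₀ (pow_ne_zero _ hκ.ne_zero) h1)
  have hρκ : ρ κ = 0 := (hκ.map_eq_zero_iff κ).2 dvd_rfl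
  rw [map_add, map_add, map_mul, hρκ, hρ, hρ₁, hρ₂] at h2
  linear_combination h2

theorem jacobi (hκ : IsUniformizer κ u ρ) (hα : IsLeading κ ρ δ n s α) (hq : 2 ≤ q) {i : ℕ}
    (hs : s ≤ 2 * i + n) {a b c : ℕ} (ha : i ≤ a) (hb : i ≤ b) (hc : i ≤ c) :
    ∃ r, κ ^ (2 * s) * (δ (δ (κ ^ a) (κ ^ b)) (κ ^ c) + δ (δ (κ ^ b) (κ ^ c)) (κ ^ a)
        + δ (δ (κ ^ c) (κ ^ a)) (κ ^ b)) = κ ^ (a + b + c + 2 * n) * r ∧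
      ρ r = α a b * α (a + b + (n + s * (q - 2))) c + α b c * α (b + c + (n + s * (q - 2))) a
        + α c a * α (c + a + (n + s * (q - 2))) b := by
  have key : ∀ {a b c : ℕ}, i ≤ a → i ≤ b → ∃ r,
      κ ^ (2 * s) * δ (δ (κ ^ a) (κ ^ b)) (κ ^ c) = κ ^ (a + b + c + 2 * n) * r ∧
      ρ r = α a b * α (a + b + (n + s * (q - 2))) c := by
    intro a b c ha hb
    obtain ⟨t, ht, hρt⟩ := hα a b 1 1
    obtain ⟨m, hm⟩ : ∃ m, a + b + n = s + m := ⟨a + b + n - s, by omega⟩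
    have h1 : δ (κ ^ a) (κ ^ b) = κ ^ m * t := by
      apply mul_left_cancel₀ (pow_ne_zero s hκ.ne_zero)
      rw [mul_one, mul_one, hm, pow_add, mul_assoc] at ht
      exact ht
    obtain ⟨r, hr, hρr⟩ := hα m c t 1
    have h2 : α (a + b + (n + s * (q - 2))) c = α m c := by
      have h3 : a + b + (n + s * (q - 2)) = m + s * (q - 1) := by
        obtain ⟨l, rfl⟩ := Nat.exists_eq_add_of_le hq
        rw [← add_assoc, hm, Nat.add_sub_cancel_left, show 2 + l - 1 = l + 1 by omega]
        ring
      have h4 : Function.Periodic (fun j => α j c) (q - 1) := fun j => hα.periodic hκ j c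
      have h5 := h4.nat_mul s m
      rw [h3]
      simpa using h5
    refine ⟨r, ?_, ?_⟩
    · rw [mul_one] at hr
      rw [h1, two_mul, pow_add, mul_assoc, hr, ← mul_assoc, ← pow_add,
        show s + (m + c + n) = a + b + c + 2 * n by omega]
    · rw [hρr, hρt, h2]
      simp only [map_one, mul_one]; ring
  obtain ⟨r₁, h₁, e₁⟩ := key (c := c) ha hb
  obtain ⟨r₂, h₂, e₂⟩ := key (c := a) hb hc
  obtain ⟨r₃, h₃, e₃⟩ := key (c := b) hc ha
  refine ⟨r₁ + r₂ + r₃, ?_, by rw [map_add, map_add, e₁, e₂, e₃]⟩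
  rw [show b + c + a + 2 * n = a + b + c + 2 * n by ring] at h₂
  rw [show c + a + b + 2 * n = a + b + c + 2 * n by ring] at h₃
  linear_combination h₁ + h₂ + h₃

end IsLeading

/-- The largest `n` for which `n - s` is a lower bound for the shift of valuations under `δ`. -/
theorem exists_maximal_offset (hκ : IsUniformizer κ u ρ) (hδ : δ ≠ 0) :
    ∃ n s, (∀ j k, κ ^ (j + k + n) ∣ κ ^ s * δ (κ ^ j) (κ ^ k)) ∧
      ¬ ∀ j k, κ ^ (j + k + (n + 1)) ∣ κ ^ s * δ (κ ^ j) (κ ^ k) := by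
  have hq : q.Prime := Fact.out
  let P : ℕ → Prop := fun n =>
    ∀ j k, κ ^ (j + k + n) ∣ κ ^ (2 * (q - 1)) * δ (κ ^ j) (κ ^ k)
  suffices h : ∃ n, P n ∧ ¬ P (n + 1) by
    obtain ⟨n, h1, h2⟩ := h
    exact ⟨n, 2 * (q - 1), h1, h2⟩
  have h0 : P 0 := by
    obtain ⟨v, hv⟩ := (hκ.isUnit_of_map_ne_zero u (by rw [hκ.map_unit]; simp)).exists_right_inv
    have hpow : ∀ j, κ ^ j = (q ^ (j / (q - 1))) • (v ^ (j / (q - 1)) * κ ^ (j % (q - 1))) := by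
      intro j
      conv_lhs => rw [← Nat.div_add_mod j (q - 1), pow_add, pow_mul]
      rw [nsmul_eq_mul, Nat.cast_pow, hκ.natCast_eq, mul_pow]
      rw [show (κ ^ (q - 1)) ^ (j / (q - 1)) * u ^ (j / (q - 1)) *
        (v ^ (j / (q - 1)) * κ ^ (j % (q - 1))) = (κ ^ (q - 1)) ^ (j / (q - 1)) *
        (u * v) ^ (j / (q - 1)) * κ ^ (j % (q - 1)) by ring, hv]
      ring
    intro j k
    rw [hpow j, hpow k, map_nsmul, map_nsmul, LinearMap.smul_apply, nsmul_eq_mul, nsmul_eq_mul,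
      ← mul_assoc, ← mul_assoc]
    refine Dvd.dvd.mul_right ?_ _
    rw [Nat.cast_pow, Nat.cast_pow, hκ.natCast_eq, mul_pow, mul_pow,
      show κ ^ (2 * (q - 1)) * ((κ ^ (q - 1)) ^ (k / (q - 1)) * u ^ (k / (q - 1))) *
        ((κ ^ (q - 1)) ^ (j / (q - 1)) * u ^ (j / (q - 1))) =
        κ ^ (2 * (q - 1) + (q - 1) * (k / (q - 1)) + (q - 1) * (j / (q - 1))) *
        u ^ (j / (q - 1) + k / (q - 1)) by ring]
    refine Dvd.dvd.mul_right (pow_dvd_pow κ ?_) _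
    have h1 := Nat.div_add_mod j (q - 1)
    have h2 := Nat.div_add_mod k (q - 1)
    have h3 := Nat.mod_lt j (show 0 < q - 1 by have := hq.two_le; omega)
    have h4 := Nat.mod_lt k (show 0 < q - 1 by have := hq.two_le; omega)
    omega
  by_contra! hcon
  have hall : ∀ n, P n := fun n => Nat.rec h0 hcon n
  apply hδ
  refine LinearMap.ext_on_range hκ.span_pow_eq_top fun j => ?_
  refine LinearMap.ext_on_range hκ.span_pow_eq_top fun k => ?_
  have h1 : κ ^ (2 * (q - 1)) * δ (κ ^ j) (κ ^ k) = 0 :=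
    hκ.eq_zero_of_forall_dvd _ fun n => (pow_dvd_pow κ (by omega)).trans (hall n j k)
  simpa [hκ.ne_zero] using h1

theorem eq_zero_of_periodic {M : Type*} [Zero M] {f : ℕ → M} {N : ℕ} (hN : 0 < N)
    (hf : Function.Periodic f N) (i : ℕ) (h : ∀ v < N, f (i + v) = 0) (j : ℕ) : f j = 0 := by
  obtain ⟨m, rfl⟩ := Nat.exists_eq_add_of_lt hN
  rw [← h ((j + (0 + m) * i) % (0 + m + 1)) (Nat.mod_lt _ hN), ← hf.map_mod_nat j,
    ← hf.map_mod_nat (i + _), Nat.add_mod_mod,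
    show i + (j + (0 + m) * i) = j + (0 + m + 1) * i by ring, Nat.add_mul_mod_self_left]

/-- If `δ` maps `𝔭^i × 𝔭^i` into `𝔭^(2i+1)`, then `δ` lowers sums of valuations by at most
`s - n ≤ q - 3`, and some Jacobi expression on `𝔭^i` has controlled valuation. -/
theorem exists_offset_and_jacobi (hκ : IsUniformizer κ u ρ) (hq : 2 < q) (hδ : δ ≠ 0)
    (halt : ∀ x, δ x x = 0) (hequi : ∀ x y, δ ((1 + κ) * x) ((1 + κ) * y) = (1 + κ) * δ x y)
    {i : ℕ} (hi : q - 2 < i)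
    (himage : ∀ x y, κ ^ i ∣ x → κ ^ i ∣ y → κ ^ (2 * i + 1) ∣ δ x y) :
    ∃ n s, s + 3 ≤ n + q ∧
      (∀ a b x y, κ ^ a ∣ x → κ ^ b ∣ y → κ ^ (a + b + n) ∣ κ ^ s * δ x y) ∧
      ∃ a b c, i ≤ a ∧ i ≤ b ∧ i ≤ c ∧ a + b + c ≤ 3 * i + 2 * (q - 2) ∧ ∃ r, IsUnit r ∧
        κ ^ (2 * s) * (δ (δ (κ ^ a) (κ ^ b)) (κ ^ c) + δ (δ (κ ^ b) (κ ^ c)) (κ ^ a)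
          + δ (δ (κ ^ c) (κ ^ a)) (κ ^ b)) = κ ^ (a + b + c + 2 * n) * r := by
  obtain ⟨n, s, hdvd, hmax⟩ := exists_maximal_offset hκ hδ
  obtain ⟨α, hα⟩ := exists_isLeading hκ hdvd
  have hper := hα.periodic hκ
  have hadd := hα.eq_add hκ hequi
  have hanti := hα.neg_swap hκ halt
  have hN : 0 < q - 1 := by omega
  have hper' : ∀ j k, α j (k + (q - 1)) = α j k := fun j k => by
    rw [hanti, hper, ← hanti]
  have hα0 : ¬ ∀ j k, α j k = 0 := by
    intro h0
    refine hmax fun j k => ?_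
    obtain ⟨r, hr, hρ⟩ := hα j k 1 1
    rw [h0, zero_mul, zero_mul, hκ.map_eq_zero_iff] at hρ
    rw [mul_one, mul_one] at hr
    rw [hr, ← add_assoc, pow_succ]
    exact mul_dvd_mul_left _ hρ
  obtain ⟨v, hv, hvα⟩ : ∃ v < q - 1, α (i + v) i ≠ 0 := by
    by_contra! hcon
    have h1 : ∀ k j, α j (i + k) = 0 := by
      intro k
      induction k with
      | zero => exact eq_zero_of_periodic hN (f := fun j => α j i) (fun j => hper j i) i hcon
      | succ k ih =>
        intro j
        have h := hadd j (i + k)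
        rw [ih, ih, zero_add] at h
        exact h.symm
    exact hα0 fun j => eq_zero_of_periodic hN (f := α j) (hper' j) i fun v _ => h1 v j
  have hsn : s + 3 ≤ n + q := by
    obtain ⟨r, hr, hρ⟩ := hα (i + v) i 1 1
    simp only [map_one, mul_one] at hr hρ
    have hru := hκ.isUnit_of_map_ne_zero r (hρ ▸ hvα)
    have h1 : κ ^ (s + (2 * i + 1)) ∣ κ ^ (i + v + i + n) * r := by
      rw [← hr, pow_add]
      exact mul_dvd_mul_left _ (himage _ _ (pow_dvd_pow κ (by omega)) dvd_rfl)
    rw [hru.dvd_mul_right] at h1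
    have hκnu : ¬ IsUnit κ := fun h =>
      (h.map ρ).ne_zero ((hκ.map_eq_zero_iff κ).2 dvd_rfl)
    have := (pow_dvd_pow_iff hκ.ne_zero hκnu).1 h1
    omega
  set β : ℕ → ℕ → ℕ → ZMod q := fun a b c =>
    α a b * α (a + b + (n + s * (q - 2))) c + α b c * α (b + c + (n + s * (q - 2))) a
      + α c a * α (c + a + (n + s * (q - 2))) b with hβ
  obtain ⟨v₁, hv₁, v₂, hv₂, hv₁₂⟩ : ∃ v₁ < q - 1, ∃ v₂ < q - 1, β (i + v₁) (i + v₂) i ≠ 0 := by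
    by_contra! hcon
    have hswap : ∀ a b c, β a b c = β b c a := fun a b c => by simp only [hβ]; ring
    have hβper : ∀ a b c, β (a + (q - 1)) b c = β a b c := by
      intro a b c
      simp only [hβ]
      rw [hper, hper', hper', show a + (q - 1) + b + (n + s * (q - 2))
        = a + b + (n + s * (q - 2)) + (q - 1) by ring, hper,
        show c + (a + (q - 1)) + (n + s * (q - 2))
        = c + a + (n + s * (q - 2)) + (q - 1) by ring, hper]
    have hβper₂ : ∀ a b c, β a (b + (q - 1)) c = β a b c := fun a b c => by
      rw [hswap, hβper, ← hswap]
    have hβper₃ : ∀ a b c, β a b (c + (q - 1)) = β a b c := fun a b c => by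
      rw [← hswap, hβper, hswap]
    have hterm : ∀ a b c m, α a b * α (a + b + m) c = α (a + 1) b * α (a + 1 + b + m) c
        + α a (b + 1) * α (a + (b + 1) + m) c + α a b * α (a + b + m) (c + 1) := by
      intro a b c m
      rw [show a + 1 + b + m = a + b + m + 1 by ring, show a + (b + 1) + m = a + b + m + 1 by ring,
        hadd (a + b + m) c]
      linear_combination α (a + b + m + 1) c * hadd a b
    have hβadd : ∀ a b c, β a b c = β (a + 1) b c + β a (b + 1) c + β a b (c + 1) := by
      intro a b c
      simp only [hβ]
      linear_combination hterm a b c (n + s * (q - 2)) + hterm b c a (n + s * (q - 2))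
        + hterm c a b (n + s * (q - 2))
    have hβzero : ∀ c a b, β a b (i + c) = 0 := by
      intro c
      induction c with
      | zero =>
        intro a b
        refine eq_zero_of_periodic hN (f := fun a => β a b i) (fun a => hβper a b i) i
          (fun v₁ hv₁ => ?_) a
        exact eq_zero_of_periodic hN (f := fun b => β (i + v₁) b i) (fun b => hβper₂ _ b i) i
          (fun v₂ hv₂ => hcon v₁ hv₁ v₂ hv₂) b
      | succ c ih =>
        intro a b
        have h := hβadd a b (i + c)
        rw [ih, ih, ih, zero_add, zero_add] at h
        exact h.symm
    exact hα0 (eq_zero_of_jacobi hq hper hanti hadd _ fun a b c =>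
      eq_zero_of_periodic hN (f := fun c => β a b c) (fun c => hβper₃ a b c) i
        (fun v _ => hβzero v a b) c)
  obtain ⟨r, hr, hρ⟩ := hα.jacobi hκ hq.le (i := i) (by omega) (a := i + v₁) (b := i + v₂)
    (c := i) (by omega) (by omega) le_rfl
  refine ⟨n, s, hsn, ?_, i + v₁, i + v₂, i, by omega, by omega, le_rfl, by omega, r,
    hκ.isUnit_of_map_ne_zero r (by rw [hρ]; exact hv₁₂), hr⟩
  rintro a b _ _ ⟨x, rfl⟩ ⟨y, rfl⟩
  exact dvd_of_forall_pow_dvd hκ hdvd a b x y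

end Leading

/-- For `i > p−2` and `γ ∈ Ĥ_i` with `J_i(γ) ≠ 0`, the Lie ring
`L_i(γ) = 𝔭^i/J_i(γ)` is nilpotent of class `c` (the least `c` with
`W_{c+1}(i) ⊆ J_i(γ)`), and `(c−3)·(i−(p−2)) ≤ 2p−8`. -/
theorem frame_class_bound (hp : 5 ≤ p) (hθ : IsPrimitiveRoot (θ : K) p)
    (hgen : Algebra.adjoin ℚ_[p] {(θ : K)} = ⊤)
    (hγ : IsPEquivariant p K θ γ)
    (i : ℕ) (hi : p - 2 < i) (hγi : InHhat p K θ i γ) (hJ : Jid p K θ γ i ≠ ⊥) :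
    ∃ c : ℕ, IsLeast {c' : ℕ | Wid p K θ γ i (c' + 1) ≤ Jid p K θ γ i} c ∧
      (c - 3) * (i - (p - 2)) ≤ 2 * p - 8 := by
  obtain ⟨u, ρ, hκ⟩ := exists_isUniformizer hθ hgen
  obtain ⟨halt, hequi⟩ := hγ
  have hmem : ∀ (m : ℕ) (x : 𝒪 p K), x ∈ pid p K θ ^ m ↔ (θ - 1) ^ m ∣ x := fun m x => by
    rw [pid, Ideal.span_singleton_pow, Ideal.mem_span_singleton]
  have himage : ∀ x y, (θ - 1) ^ i ∣ x → (θ - 1) ^ i ∣ y → (θ - 1) ^ (2 * i + 1) ∣ γ x y := by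
    intro x y hx hy
    rw [← hmem]
    have h : γ x y ∈ (pid p K θ ^ (2 * i + 1)).restrictScalars ℤ := by
      rw [← hγi]
      exact Submodule.subset_span ⟨x, (hmem i x).2 hx, y, (hmem i y).2 hy, rfl⟩
    exact h
  have hγ0 : γ ≠ 0 := by
    rintro rfl
    have h : (θ - 1) ^ (2 * i + 1) ∈ (pid p K θ ^ (2 * i + 1)).restrictScalars ℤ :=
      (hmem _ _).2 dvd_rfl
    rw [← hγi] at h
    have h0 : (θ - 1) ^ (2 * i + 1) ∈ (⊥ : Submodule ℤ (𝒪 p K)) := by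
      refine Submodule.span_le.2 ?_ h
      rintro _ ⟨x, -, y, -, rfl⟩
      simp
    exact pow_ne_zero _ hκ.ne_zero ((Submodule.mem_bot ℤ).1 h0)
  obtain ⟨n, s, hsn, hshift, a, b, c, ha, hb, hc, habc, r, hru, hr⟩ :=
    exists_offset_and_jacobi hκ (by omega) hγ0 halt (by simpa using hequi) hi himage
  obtain ⟨d, hd⟩ : ∃ d, i + n = s + d := ⟨i + n - s, by omega⟩
  have hW : ∀ k, ∀ x ∈ Wid p K θ γ i (k + 2), (θ - 1) ^ (2 * i + 1 + k * d) ∣ x := by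
    intro k
    induction k with
    | zero =>
      intro x hx
      rw [zero_mul, add_zero, ← hmem]
      refine Ideal.span_le.2 ?_ hx
      rintro _ ⟨y, hy, z, hz, rfl⟩
      exact (hmem _ _).2 (himage y z ((hmem _ _).1 hy) ((hmem _ _).1 hz))
    | succ k ih =>
      intro x hx
      rw [← hmem]
      refine Ideal.span_le.2 ?_ hx
      rintro _ ⟨y, hy, z, hz, rfl⟩
      refine (hmem _ _).2 ?_
      have h := hshift _ _ y z (ih y hy) ((hmem _ _).1 hz)
      rw [show 2 * i + 1 + k * d + i + n = s + (2 * i + 1 + (k + 1) * d) by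
        rw [add_assoc _ i n, hd]; ring, pow_add] at h
      exact (mul_dvd_mul_iff_left (pow_ne_zero s hκ.ne_zero)).1 h
  have hWJ : ∀ k, 2 * p ≤ i + k * d + 5 → Wid p K θ γ i (k + 4) ≤ Jid p K θ γ i := by
    intro k hk x hx
    have h1 := hW (k + 2) x hx
    have h2 : (θ - 1) ^ (a + b + c + 2 * n) ∣ (θ - 1) ^ (2 * s) * x := by
      have h3 : (θ - 1) ^ (2 * s + (2 * i + 1 + (k + 2) * d)) ∣ (θ - 1) ^ (2 * s) * x := by
        rw [pow_add]
        exact mul_dvd_mul_left _ h1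
      exact (pow_dvd_pow _ (by rw [add_mul]; omega)).trans h3
    rw [← hru.mul_right_dvd, ← hr, mul_dvd_mul_iff_left (pow_ne_zero _ hκ.ne_zero)] at h2
    refine Ideal.mem_of_dvd _ h2 (Ideal.subset_span ?_)
    exact ⟨_, (hmem _ _).2 (pow_dvd_pow _ ha), _, (hmem _ _).2 (pow_dvd_pow _ hb), _,
      (hmem _ _).2 (pow_dvd_pow _ hc), rfl⟩
  have hex : ∃ c', Wid p K θ γ i (c' + 1) ≤ Jid p K θ γ i := by
    refine ⟨2 * p + 3, hWJ (2 * p) ?_⟩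
    have : 2 * p * 1 ≤ 2 * p * d := Nat.mul_le_mul_left _ (by omega)
    omega
  classical
  refine ⟨Nat.find hex, ⟨Nat.find_spec hex, fun m hm => Nat.find_min' hex hm⟩, ?_⟩
  rcases Nat.lt_or_ge (Nat.find hex) 4 with hlt | hge
  · rw [Nat.sub_eq_zero_of_le (by omega), zero_mul]
    exact Nat.zero_le _
  obtain ⟨k, hk⟩ := Nat.exists_eq_add_of_le hge
  have h1 := Nat.find_min hex (m := k + 3) (by omega)
  have h2 : ¬ 2 * p ≤ i + k * d + 5 := fun h => h1 (hWJ k h)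
  rw [hk, show 4 + k - 3 = k + 1 by omega, add_mul, one_mul]
  have h3 : k * (i - (p - 2)) ≤ k * d := Nat.mul_le_mul_left _ (by omega)
  omega

end MaximalClassFrame
end
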